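/- arXiv:1004.3709 — 7 statements merged into one kernel-verified Lean document; each statement's English description precedes it below -/
import Mathlib

section
/- Let A ⊆ ZMod N with A - A = ZMod N and 0 ∈ A, and let f : A → ZMod N be a Freiman homomorphism with induced function φ_f. Then f is linear if and only if φ_f is an additive group endomorphism of ZMod N, i.e., φ_f(d + d') = φ_f(d) + φ_f(d') for all d, d' ∈ ZMod N. -/
/-!
If `f` is the restriction to `A` of `x ↦ g x + β` with `g` a group homomorphism, then taking
differences cancels `β`, so `φ_f` agrees with `g` on `A - A`, which is the whole group. Conversely,
if `φ_f` is additive and `a ∈ A`, then `f x = f a + φ_f (x - a) = φ_f x + (f a - φ_f a)` on `A`.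
On `ZMod N` the group endomorphisms are the multiplications, since `1` generates.
-/

open Pointwise

/-- `f` is a Freiman homomorphism on `A ⊆ ZMod N`. -/
def IsFreimanHomOn {N : ℕ} (A : Set (ZMod N)) (f : ZMod N → ZMod N) : Prop :=
  ∀ a ∈ A, ∀ b ∈ A, ∀ c ∈ A, ∀ d ∈ A, a - b = c - d → f a - f b = f c - f d

/-- `f` is linear on `A`: it is the restriction of `x ↦ α·x + β`. -/
def IsLinearOn {N : ℕ} (A : Set (ZMod N)) (f : ZMod N → ZMod N) : Prop :=
  ∃ α β : ZMod N, ∀ x ∈ A, f x = α * x + β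

section AddCommGroup

variable {G H : Type*} [AddCommGroup G] [AddCommGroup H] {A : Set G} {f φ : G → H}

/-- `φ` is an induced function `φ_f` of `f` on `A`. It is a relation rather than a function of `f`,
so the values of `φ` outside `A - A` are unconstrained. -/
def IsInducedFunction (A : Set G) (f φ : G → H) : Prop :=
  ∀ d x : G, x ∈ A → x + d ∈ A → φ d = f (x + d) - f x

/-- `f` is affine on `A`: it is the restriction of a translate of a group homomorphism. This is the
analogue of `IsLinearOn` for arbitrary commutative groups. -/
def IsAddAffineOn (A : Set G) (f : G → H) : Prop :=
  ∃ (g : G →+ H) (β : H), ∀ x ∈ A, f x = g x + β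

namespace IsInducedFunction

theorem apply_sub (hφ : IsInducedFunction A f φ) {x y : G} (hx : x ∈ A) (hy : y ∈ A) :
    φ (x - y) = f x - f y := by
  simpa only [add_sub_cancel] using hφ (x - y) y hy (by rwa [add_sub_cancel])

theorem eqOn_addMonoidHom (hφ : IsInducedFunction A f φ) {g : G →+ H} {β : H}
    (hf : ∀ x ∈ A, f x = g x + β) : Set.EqOn φ g (A - A) := by
  rintro _ ⟨x, hx, y, hy, rfl⟩
  rw [hφ.apply_sub hx hy, hf x hx, hf y hy, add_sub_add_right_eq_sub, map_sub]

theorem isAddAffineOn (hφ : IsInducedFunction A f φ) (hA : A.Nonempty)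
    (hadd : ∀ d d', φ (d + d') = φ d + φ d') : IsAddAffineOn A f := by
  obtain ⟨a, ha⟩ := hA
  let g : G →+ H := AddMonoidHom.mk' φ hadd
  refine ⟨g, f a - g a, fun x hx ↦ ?_⟩
  have hg : g x - g a = f x - f a := (map_sub g x a).symm.trans (hφ.apply_sub hx ha)
  rw [add_sub_left_comm, hg, add_sub_cancel]

end IsInducedFunction

theorem linear_iff_induced_function_additive_general (hA : A - A = Set.univ)
    (hφ : IsInducedFunction A f φ) :
    IsAddAffineOn A f ↔ ∀ d d', φ (d + d') = φ d + φ d' := by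
  constructor
  · rintro ⟨g, β, hf⟩
    have hφg : φ = g := Set.eqOn_univ φ g |>.mp (hA ▸ hφ.eqOn_addMonoidHom hf)
    exact hφg ▸ map_add g
  · have hne : (A - A).Nonempty := hA ▸ Set.univ_nonempty
    exact hφ.isAddAffineOn hne.of_sub_left

end AddCommGroup

section ZMod

variable {N : ℕ}

theorem addMonoidHom_zmod_apply {M : Type*} [AddCommGroup M] [Module (ZMod N) M]
    (g : ZMod N →+ M) (x : ZMod N) : g x = x • g 1 := by
  simpa only [smul_eq_mul, mul_one] using ZMod.map_smul g x 1

theorem isLinearOn_iff_isAddAffineOn {A : Set (ZMod N)} {f : ZMod N → ZMod N} :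
    IsLinearOn A f ↔ IsAddAffineOn A f := by
  constructor
  · rintro ⟨α, β, hf⟩
    exact ⟨AddMonoidHom.mulLeft α, β, hf⟩
  · rintro ⟨g, β, hf⟩
    refine ⟨g 1, β, fun x hx ↦ ?_⟩
    rw [hf x hx, addMonoidHom_zmod_apply, smul_eq_mul, mul_comm]

end ZMod

theorem linear_iff_induced_function_additive (N : ℕ) (A : Set (ZMod N))
    (hA : A - A = Set.univ) (h0 : (0 : ZMod N) ∈ A)
    (f : ZMod N → ZMod N) (hf : IsFreimanHomOn A f)
    (φ : ZMod N → ZMod N)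
    (hφ : ∀ d x : ZMod N, x ∈ A → x + d ∈ A → φ d = f (x + d) - f x) :
    IsLinearOn A f ↔ ∀ d d' : ZMod N, φ (d + d') = φ d + φ d' :=
  isLinearOn_iff_isAddAffineOn.trans (linear_iff_induced_function_additive_general hA hφ)
end

section
/- Let A ⊆ ZMod N, let a, b, c ∈ ZMod N, and let i ≥ 0 be such that Λ^i_{a,b,c}(A) > 0. Then every function φ : ZMod N → ZMod N satisfying φ(d + d') = φ(d) + φ(d') for every additive pair (d, d') also satisfies φ(c - a) = φ(b - a) + φ(c - b). -/
/-- The counting polynomials `Λ^i_{a,b,c}[t]`. -/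
noncomputable def Lam (N : ℕ) : ℕ → ZMod N → ZMod N → ZMod N → (ZMod N → ℝ) → ℝ
  | 0 => fun a b c t => ∑ᶠ x : ZMod N, t (x + a) * t (x + b) * t (x + c)
  | (i + 1) => fun a b c t =>
      ∑ᶠ z : ZMod N, Lam N i a b z t * Lam N i a z c t * Lam N i z b c t

/-!
A nonvanishing `Λ⁰_{a,b,c}` says that some translate of `(a, b, c)` lies in the support of `t`, so
`(b - a, c - b)` is an additive pair. A nonvanishing `Λ^{i+1}_{a,b,c}` provides a `z` for which the
triples `(a, b, z)`, `(a, z, c)` and `(z, b, c)` are all additive at level `i`, whence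
`φ (c - a) = φ (b - a) + φ (z - b) + φ (b - z) + φ (c - b)`.
The middle terms cancel: `d = z - b` is a difference of two points of the support, so `(d, -d)` and
`(0, 0)` are additive pairs.
-/

open Function
open scoped Pointwise

section AdditivePair

variable {H G : Type*}

/-- The pair of differences `(d, d')` is additive for `A`: it consists of the consecutive
differences of three points of `A`. -/
def IsAdditivePair [Add H] (A : Set H) (d d' : H) : Prop :=
  ∃ x, x ∈ A ∧ x + d ∈ A ∧ x + d + d' ∈ A

/-- `φ` respects the sum of every additive pair for `A`. This is a condition on the differences of
points of `A`, whereas a Freiman homomorphism on `A` is a condition on `φ` at points of `A`. -/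
def MapsAdditivePairs [Add H] [Add G] (A : Set H) (φ : H → G) : Prop :=
  ∀ d d', IsAdditivePair A d d' → φ (d + d') = φ d + φ d'

theorem isAdditivePair_of_add_mem [AddCommGroup H] {A : Set H} {a b c x : H}
    (ha : x + a ∈ A) (hb : x + b ∈ A) (hc : x + c ∈ A) : IsAdditivePair A (b - a) (c - b) :=
  ⟨x + a, ha, by simpa [add_assoc] using hb, by simpa [add_assoc] using hc⟩

theorem isAdditivePair_neg_of_mem_sub [AddCommGroup H] {A : Set H} {d : H} (hd : d ∈ A - A) :
    IsAdditivePair A d (-d) := by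
  obtain ⟨y, hy, x, hx, rfl⟩ := Set.mem_sub.mp hd
  exact ⟨x, hx, by simpa using hy, by simpa using hx⟩

namespace MapsAdditivePairs

theorem map_zero [AddZeroClass H] [AddLeftCancelMonoid G] {A : Set H} {φ : H → G}
    (hφ : MapsAdditivePairs A φ) (hA : A.Nonempty) : φ 0 = 0 := by
  obtain ⟨x, hx⟩ := hA
  have h : φ (0 + 0) = φ 0 + φ 0 := hφ 0 0 ⟨x, by simpa using hx⟩
  simpa using h

variable [AddCommGroup H] [AddLeftCancelMonoid G] {A : Set H} {φ : H → G}

theorem map_add_map_neg (hφ : MapsAdditivePairs A φ) {d : H} (hd : d ∈ A - A) :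
    φ d + φ (-d) = 0 := by
  have hA : A.Nonempty := (Set.sub_nonempty.mp ⟨d, hd⟩).1
  rw [← hφ d (-d) (isAdditivePair_neg_of_mem_sub hd), add_neg_cancel, hφ.map_zero hA]

theorem map_sub_of_triangles (hφ : MapsAdditivePairs A φ) {a b c z : H} (hz : z - b ∈ A - A)
    (habz : φ (z - a) = φ (b - a) + φ (z - b)) (hazc : φ (c - a) = φ (z - a) + φ (c - z))
    (hzbc : φ (c - z) = φ (b - z) + φ (c - b)) : φ (c - a) = φ (b - a) + φ (c - b) := by
  have hcancel : φ (z - b) + φ (b - z) = 0 := by simpa using hφ.map_add_map_neg hz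
  calc φ (c - a) = φ (b - a) + (φ (z - b) + φ (b - z)) + φ (c - b) := by
        rw [hazc, habz, hzbc]; simp only [add_assoc]
    _ = φ (b - a) + φ (c - b) := by rw [hcancel, add_zero]

end MapsAdditivePairs

end AdditivePair

section Lam

variable {N i : ℕ} {a b c : ZMod N} {t : ZMod N → ℝ}

theorem exists_add_mem_support_of_Lam_zero_ne_zero (h : Lam N 0 a b c t ≠ 0) :
    ∃ x, x + a ∈ support t ∧ x + b ∈ support t ∧ x + c ∈ support t := by
  obtain ⟨x, hx⟩ := not_forall.mp (mt finsum_eq_zero_of_forall_eq_zero h)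
  exact ⟨x, by simpa [and_assoc] using hx⟩

theorem exists_Lam_ne_zero_of_Lam_succ_ne_zero (h : Lam N (i + 1) a b c t ≠ 0) :
    ∃ z, Lam N i a b z t ≠ 0 ∧ Lam N i a z c t ≠ 0 ∧ Lam N i z b c t ≠ 0 := by
  obtain ⟨z, hz⟩ := not_forall.mp (mt finsum_eq_zero_of_forall_eq_zero h)
  exact ⟨z, by simpa [and_assoc] using hz⟩

theorem sub_mem_support_sub_support_of_Lam_ne_zero (h : Lam N i a b c t ≠ 0) :
    c - b ∈ support t - support t := by
  induction i generalizing a with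
  | zero =>
    obtain ⟨x, -, hb, hc⟩ := exists_add_mem_support_of_Lam_zero_ne_zero h
    simpa using Set.sub_mem_sub hc hb
  | succ i ih =>
    obtain ⟨z, -, -, hzbc⟩ := exists_Lam_ne_zero_of_Lam_succ_ne_zero h
    exact ih hzbc

theorem additive_of_Lam_pos_general {G : Type*} [AddLeftCancelMonoid G] {φ : ZMod N → G}
    (hφ : MapsAdditivePairs (support t) φ) (h : Lam N i a b c t ≠ 0) :
    φ (c - a) = φ (b - a) + φ (c - b) := by
  induction i generalizing a b c with
  | zero =>
    obtain ⟨x, ha, hb, hc⟩ := exists_add_mem_support_of_Lam_zero_ne_zero h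
    simpa using hφ _ _ (isAdditivePair_of_add_mem ha hb hc)
  | succ i ih =>
    obtain ⟨z, habz, hazc, hzbc⟩ := exists_Lam_ne_zero_of_Lam_succ_ne_zero h
    exact hφ.map_sub_of_triangles (sub_mem_support_sub_support_of_Lam_ne_zero habz)
      (ih habz) (ih hazc) (ih hzbc)

end Lam

theorem additive_of_Lam_pos (N : ℕ) (A : Set (ZMod N)) (a b c : ZMod N) (i : ℕ)
    (hΛ : 0 < Lam N i a b c (A.indicator fun _ => (1 : ℝ)))
    (φ : ZMod N → ZMod N)
    (hφ : ∀ d d' : ZMod N,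
      (∃ x : ZMod N, x ∈ A ∧ x + d ∈ A ∧ x + d + d' ∈ A) →
      φ (d + d') = φ d + φ d') :
    φ (c - a) = φ (b - a) + φ (c - b) := by
  have hA : support (A.indicator fun _ => (1 : ℝ)) = A := by
    rw [Set.support_indicator, support_const one_ne_zero, Set.inter_univ]
  exact additive_of_Lam_pos_general (hA.symm ▸ hφ) hΛ.ne'
end

section
/- Let ε be a real number with 0 < ε < 4/9, and for each N let p = p(N) = N^{-4/9+ε}. Let A be a random subset of ZMod N with parameter p. Then with high probability (as N → ∞), Λ¹_{a,b,c}(A) > 0 simultaneously for all pairwise distinct a, b, c ∈ ZMod N. -/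
open MeasureTheory Filter

/-- The Bernoulli measure on `Bool` with parameter `p` (for `p ≤ 1`). -/
noncomputable def bernoulliBool (p : NNReal) : Measure Bool :=
  (p : ENNReal) • Measure.dirac true + (1 - (p : ENNReal)) • Measure.dirac false

/-- The law of a random subset of `ZMod N` (encoded as `ZMod N → Bool`) where each
element is included independently with probability `p`. -/
noncomputable def randomSubsetMeasure (N : ℕ) (p : NNReal) : Measure (ZMod N → Bool) :=
  if h : N = 0 then 0 else
    haveI : NeZero N := ⟨h⟩
    Measure.pi fun _ => bernoulliBool p

/-!
`Λ¹_{a,b,c}(A)` is positive if and only if `A` contains the nine points of some configuration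
`(z, x₀, x₁, x₂)`: `z + x₀`, `z + x₁`, `z + x₂` and two of the points `a`, `b`, `c` translated by
each `xᵢ`. About `N ^ 4 p ^ 9 = N ^ (9 ε)` such configurations are expected.

A random set of density `p` is a union of nine independent random sets of density of order `p`.
Asking for the `i`-th point of a configuration in the `i`-th set makes the nine points independent
even when they coincide, so the second moment is an exact count of the coincidences between two
configurations, and Chebyshev's inequality bounds the failure probability by `O(N ^ (-δ))` for some
`δ > 0`. This is too weak for a union bound over the `N ^ 3` triples. Writing the random set first
as a union of `m` independent sparser ones, all of which have to fail, raises the bound to the power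
`m`.
-/

open scoped NNReal

/-- The law of a random subset of `ι` (encoded as `ι → Bool`) containing each element independently
with probability `p`, for an arbitrary finite index type. -/
noncomputable def bernoulliPi (ι : Type*) [Fintype ι] (p : ℝ≥0) : Measure (ι → Bool) :=
  Measure.pi fun _ => bernoulliBool p

section Bernoulli

variable {ι κ : Type*} [Fintype ι] [Fintype κ] {p q : ℝ≥0}

theorem isProbabilityMeasure_bernoulliBool (hp : p ≤ 1) :
    IsProbabilityMeasure (bernoulliBool p) where
  measure_univ := by
    simp [bernoulliBool, add_tsub_cancel_of_le (ENNReal.coe_le_one_iff.mpr hp)]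

theorem bernoulliBool_singleton_true : bernoulliBool p {true} = p := by
  simp [bernoulliBool]

theorem bernoulliBool_singleton_false : bernoulliBool p {false} = ((1 - p : ℝ≥0) : ENNReal) := by
  simp [bernoulliBool]

theorem isProbabilityMeasure_bernoulliPi (hp : p ≤ 1) :
    IsProbabilityMeasure (bernoulliPi ι p) :=
  have := isProbabilityMeasure_bernoulliBool hp
  inferInstanceAs (IsProbabilityMeasure (Measure.pi _))

theorem bernoulliPi_forall_mem_eq_true (hp : p ≤ 1) (s : Finset ι) :
    bernoulliPi ι p {ω | ∀ i ∈ s, ω i = true} = (p : ENNReal) ^ s.card := by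
  have := isProbabilityMeasure_bernoulliBool hp
  have h_pi : {ω : ι → Bool | ∀ i ∈ s, ω i = true} = (s : Set ι).pi fun _ => {true} := by
    ext; simp
  rw [h_pi, bernoulliPi, Measure.pi_pi_finset]
  simp [bernoulliBool_singleton_true]

theorem measureReal_pi_bernoulliPi_forall_mem_eq_true (hp : p ≤ 1) (s : κ → Finset ι) :
    (Measure.pi fun _ : κ => bernoulliPi ι p).real {W | ∀ c, ∀ i ∈ s c, W c i = true} =
      ∏ c, (p : ℝ) ^ (s c).card := by
  have := isProbabilityMeasure_bernoulliPi (ι := ι) hp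
  have h_pi : {W : κ → ι → Bool | ∀ c, ∀ i ∈ s c, W c i = true} =
      Set.univ.pi fun c => {ω | ∀ i ∈ s c, ω i = true} := by
    ext; simp
  rw [h_pi, measureReal_def, Measure.pi_pi]
  simp [bernoulliPi_forall_mem_eq_true hp, ENNReal.toReal_prod]

theorem map_swap_pi_pi {α : Type*} [MeasurableSpace α] [MeasurableSingletonClass α] [Countable α]
    (μ : κ → ι → Measure α) [∀ j i, SigmaFinite (μ j i)] :
    (Measure.pi fun j => Measure.pi (μ j)).map Function.swap =
      Measure.pi fun i => Measure.pi fun j => μ j i := by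
  refine Measure.ext_of_singleton fun w => ?_
  have h_preimage : Function.swap ⁻¹' {w} = {Function.swap w} := by
    ext v
    exact ⟨fun h => congrArg Function.swap h, fun h => congrArg Function.swap h⟩
  rw [Measure.map_apply (by unfold Function.swap; fun_prop) (measurableSet_singleton w), h_preimage]
  simp only [Measure.pi_singleton]
  exact Finset.prod_comm

theorem map_iSup_pi_bernoulliBool (hp : p ≤ 1) (hq : q ≤ 1)
    (h : 1 - p = (1 - q) ^ Fintype.card κ) :
    (Measure.pi fun _ : κ => bernoulliBool q).map (fun w => ⨆ j, w j) = bernoulliBool p := by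
  have := isProbabilityMeasure_bernoulliBool hp
  have := isProbabilityMeasure_bernoulliBool hq
  have h_meas : Measurable fun w : κ → Bool => ⨆ j, w j := measurable_of_finite _
  have := Measure.isProbabilityMeasure_map (μ := Measure.pi fun _ : κ => bernoulliBool q)
    h_meas.aemeasurable
  have h_false : (Measure.pi fun _ : κ => bernoulliBool q).map (fun w => ⨆ j, w j) {false} =
      bernoulliBool p {false} := by
    have h_preimage : (fun w : κ → Bool => ⨆ j, w j) ⁻¹' {false} =
        Set.univ.pi fun _ => {false} := by
      ext w
      simpa using iSup_eq_bot (s := w)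
    rw [Measure.map_apply h_meas (measurableSet_singleton _), h_preimage, Measure.pi_pi]
    simp [bernoulliBool_singleton_false, -ENNReal.coe_sub, h]
  refine Measure.ext_of_singleton fun b => ?_
  cases b with
  | false => exact h_false
  | true =>
    rw [show ({true} : Set Bool) = {false}ᶜ by ext b; cases b <;> simp,
      prob_compl_eq_one_sub (measurableSet_singleton _),
      prob_compl_eq_one_sub (measurableSet_singleton _), h_false]

theorem map_iSup_pi_bernoulliPi (hp : p ≤ 1) (hq : q ≤ 1)
    (h : 1 - p = (1 - q) ^ Fintype.card κ) :
    (Measure.pi fun _ : κ => bernoulliPi ι q).map (fun W => ⨆ j, W j) = bernoulliPi ι p := by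
  have := isProbabilityMeasure_bernoulliBool hp
  have := isProbabilityMeasure_bernoulliBool hq
  have h_coord := Measure.pi_map_pi (μ := fun _ : ι => Measure.pi fun _ : κ => bernoulliBool q)
    (f := fun _ w => ⨆ j, w j) fun _ => (measurable_of_finite _).aemeasurable
  simp only [map_iSup_pi_bernoulliBool hp hq h] at h_coord
  unfold bernoulliPi
  rw [← h_coord, ← map_swap_pi_pi fun _ _ => bernoulliBool q,
    Measure.map_map (measurable_of_finite _) (measurable_of_finite _)]
  congr 1
  ext W i
  simp [Function.swap]

theorem measureReal_bernoulliPi_eq_pi (hp : p ≤ 1) (hq : q ≤ 1)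
    (h : 1 - p = (1 - q) ^ Fintype.card κ) (S : Set (ι → Bool)) :
    (bernoulliPi ι p).real S =
      (Measure.pi fun _ : κ => bernoulliPi ι q).real {W | ⨆ j, W j ∈ S} := by
  rw [← map_iSup_pi_bernoulliPi hp hq h,
    map_measureReal_apply (measurable_of_finite _) S.toFinite.measurableSet]
  rfl

theorem measureReal_bernoulliPi_le_pow_of_isLowerSet (hp : p ≤ 1) (hq : q ≤ 1) {m : ℕ}
    (h : 1 - p = (1 - q) ^ m) {S : Set (ι → Bool)} (hS : IsLowerSet S) :
    (bernoulliPi ι p).real S ≤ (bernoulliPi ι q).real S ^ m := by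
  have := isProbabilityMeasure_bernoulliPi (ι := ι) hq
  calc (bernoulliPi ι p).real S
      = (Measure.pi fun _ : Fin m => bernoulliPi ι q).real {W | ⨆ j, W j ∈ S} :=
        measureReal_bernoulliPi_eq_pi hp hq (by simpa using h) S
    _ ≤ (Measure.pi fun _ : Fin m => bernoulliPi ι q).real (Set.univ.pi fun _ => S) :=
        measureReal_mono fun W hW j _ => hS (le_iSup W j) hW
    _ = (bernoulliPi ι q).real S ^ m := by simp [measureReal_def, Measure.pi_pi]

theorem exists_one_sub_eq_one_sub_pow (hp : p ≤ 1) {m : ℕ} (hm : m ≠ 0) :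
    ∃ q : ℝ≥0, q ≤ 1 ∧ p ≤ m * q ∧ 1 - p = (1 - q) ^ m := by
  obtain ⟨s, hs_pow⟩ : ∃ s : ℝ≥0, s ^ m = 1 - p := ⟨_, NNReal.rpow_inv_natCast_pow _ hm⟩
  have hs : s ≤ 1 := (pow_le_one_iff hm).mp (hs_pow ▸ tsub_le_self)
  refine ⟨1 - s, tsub_le_self, ?_, by rw [tsub_tsub_cancel_of_le hs, hs_pow]⟩
  have h_bernoulli := one_add_mul_le_pow (a := (s : ℝ) - 1) (by linarith [s.coe_nonneg]) m
  have hs_pow' : (s : ℝ) ^ m = 1 - p := by simpa [hp] using congrArg NNReal.toReal hs_pow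
  rw [add_sub_cancel, hs_pow'] at h_bernoulli
  rw [← NNReal.coe_le_coe]
  push_cast [hs]
  linarith

theorem exists_one_sub_eq_one_sub_pow_and (hp : p ≤ 1) {m d : ℕ} (hm : m ≠ 0) (hd : d ≠ 0) :
    ∃ q r : ℝ≥0, q ≤ 1 ∧ r ≤ 1 ∧ p ≤ m * d * r ∧ 1 - p = (1 - q) ^ m ∧ 1 - q = (1 - r) ^ d := by
  obtain ⟨q, hq, hpq, h_pq⟩ := exists_one_sub_eq_one_sub_pow hp hm
  obtain ⟨r, hr, hqr, h_qr⟩ := exists_one_sub_eq_one_sub_pow hq hd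
  exact ⟨q, r, hq, hr, by rw [mul_assoc]; exact hpq.trans (by gcongr), h_pq, h_qr⟩

end Bernoulli

section SecondMoment

variable {ι κ V : Type*} [Fintype ι] [Fintype κ] [Fintype V] {q r : ℝ≥0}

theorem measureReal_compl_iUnion_mul_sq_le {Ω : Type*} [MeasurableSpace Ω] {μ : Measure Ω}
    [IsProbabilityMeasure μ] {E : V → Set Ω} (hE : ∀ v, MeasurableSet (E v)) :
    μ.real (⋃ v, E v)ᶜ * (∑ v, μ.real (E v)) ^ 2 ≤
      ∑ v, ∑ w, μ.real (E v ∩ E w) - (∑ v, μ.real (E v)) ^ 2 := by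
  set X : Ω → ℝ := fun ω => ∑ v, (E v).indicator 1 ω
  set m := ∑ v, μ.real (E v)
  have hX_meas : Measurable X :=
    Finset.measurable_fun_sum _ fun v _ => measurable_one.indicator (hE v)
  have hX : MemLp X 2 μ :=
    memLp_finsetSum _ fun v _ => (memLp_const 1).indicator (hE v)
  have h_mean : ∫ ω, X ω ∂μ = m := by
    rw [integral_finsetSum _ fun v _ => (integrable_const 1).indicator (hE v)]
    simp [m, hE]
  have h_sq : ∫ ω, (X ^ 2) ω ∂μ = ∑ v, ∑ w, μ.real (E v ∩ E w) := by
    have h_expand (ω : Ω) : (X ^ 2) ω = ∑ v, ∑ w, (E v ∩ E w).indicator 1 ω := by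
      simp [X, sq, Finset.sum_mul_sum, Set.inter_indicator_one]
    have h_int (v w : V) : Integrable ((E v ∩ E w).indicator (1 : Ω → ℝ)) μ :=
      (integrable_const 1).indicator ((hE v).inter (hE w))
    simp_rw [h_expand]
    rw [integral_finsetSum _ fun v _ => integrable_finsetSum _ fun w _ => h_int v w]
    refine Finset.sum_congr rfl fun v _ => ?_
    rw [integral_finsetSum _ fun w _ => h_int v w]
    simp [(hE _).inter (hE _)]
  have h_zero : (⋃ v, E v)ᶜ ⊆ {ω | m ^ 2 ≤ (X ω - m) ^ 2} := by
    intro ω hω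
    have : X ω = 0 := Finset.sum_eq_zero fun v _ =>
      Set.indicator_of_notMem (fun hv => hω (Set.mem_iUnion_of_mem v hv)) _
    simp [this]
  calc μ.real (⋃ v, E v)ᶜ * m ^ 2
      ≤ m ^ 2 * μ.real {ω | m ^ 2 ≤ (X ω - m) ^ 2} := by
        rw [mul_comm]; gcongr; finiteness
    _ ≤ ∫ ω, (X ω - m) ^ 2 ∂μ :=
        mul_meas_ge_le_integral_of_nonneg (.of_forall fun ω => sq_nonneg _)
          (hX.sub (memLp_const m)).integrable_sq _
    _ = ∑ v, ∑ w, μ.real (E v ∩ E w) - m ^ 2 := by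
        rw [← h_sq, ← h_mean, ← ProbabilityTheory.variance_eq_integral hX_meas.aemeasurable,
          ProbabilityTheory.variance_eq_sub hX]

theorem measureReal_pi_bernoulliPi_inter [DecidableEq ι] (hr₀ : r ≠ 0) (hr : r ≤ 1) (f g : κ → ι) :
    (Measure.pi fun _ : κ => bernoulliPi ι r).real
        ({W | ∀ c, W c (f c) = true} ∩ {W | ∀ c, W c (g c) = true}) =
      ((r : ℝ) ^ Fintype.card κ) ^ 2 * ∏ c, if f c = g c then (r : ℝ)⁻¹ else 1 := by
  have h_inter : {W : κ → ι → Bool | ∀ c, W c (f c) = true} ∩ {W | ∀ c, W c (g c) = true} =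
      {W | ∀ c, ∀ i ∈ ({f c, g c} : Finset ι), W c i = true} := by
    ext W
    simp [forall_and]
  have h_card (x y : ι) :
      (r : ℝ) ^ ({x, y} : Finset ι).card = (r : ℝ) ^ 2 * if x = y then (r : ℝ)⁻¹ else 1 := by
    split_ifs with hxy
    · simp [hxy, sq, hr₀]
    · simp [Finset.card_pair hxy]
  rw [h_inter, measureReal_pi_bernoulliPi_forall_mem_eq_true hr]
  simp only [h_card, Finset.prod_mul_distrib, Finset.prod_const, Finset.card_univ]
  ring

theorem measureReal_pi_bernoulliPi_forall_exists_eq_false_le [DecidableEq ι] [Nonempty V]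
    (hr₀ : 0 < r) (hr : r ≤ 1) (φ : κ → V → ι) :
    (Measure.pi fun _ : κ => bernoulliPi ι r).real {W | ∀ v, ∃ c, W c (φ c v) = false} ≤
      (∑ v, ∑ w, ∏ c, if φ c v = φ c w then (r : ℝ)⁻¹ else 1) / (Fintype.card V : ℝ) ^ 2 - 1 := by
  have := isProbabilityMeasure_bernoulliPi (ι := ι) hr
  set μ := Measure.pi fun _ : κ => bernoulliPi ι r
  set d := Fintype.card κ
  set T := ∑ v, ∑ w, ∏ c, if φ c v = φ c w then (r : ℝ)⁻¹ else 1 with hT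
  let E (v : V) : Set (κ → ι → Bool) := {W | ∀ c, W c (φ c v) = true}
  have h_single (v : V) : μ.real (E v) = (r : ℝ) ^ d := by
    simpa [E] using
      measureReal_pi_bernoulliPi_forall_mem_eq_true hr fun c => ({φ c v} : Finset ι)
  have h_pair (v w : V) : μ.real (E v ∩ E w) =
      ((r : ℝ) ^ d) ^ 2 * ∏ c, if φ c v = φ c w then (r : ℝ)⁻¹ else 1 :=
    measureReal_pi_bernoulliPi_inter hr₀.ne' hr (φ · v) (φ · w)
  have h_moment := measureReal_compl_iUnion_mul_sq_le (μ := μ) (E := E)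
    fun v => (E v).toFinite.measurableSet
  have h_compl : (⋃ v, E v)ᶜ = {W | ∀ v, ∃ c, W c (φ c v) = false} := by
    ext W
    simp [E]
  simp only [h_compl, h_single, h_pair, ← Finset.mul_sum, ← hT, Finset.sum_const,
    Finset.card_univ, nsmul_eq_mul] at h_moment
  have h_pos : 0 < ((Fintype.card V : ℝ) * r ^ d) ^ 2 := by positivity
  refine le_of_mul_le_mul_right (h_moment.trans_eq ?_) h_pos
  field_simp

theorem measureReal_bernoulliPi_forall_exists_eq_false_le [DecidableEq ι] [Nonempty V]
    (hq : q ≤ 1) (hr₀ : 0 < r) (hr : r ≤ 1) (h : 1 - q = (1 - r) ^ Fintype.card κ)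
    (φ : κ → V → ι) :
    (bernoulliPi ι q).real {ω | ∀ v, ∃ c, ω (φ c v) = false} ≤
      (∑ v, ∑ w, ∏ c, if φ c v = φ c w then (r : ℝ)⁻¹ else 1) / (Fintype.card V : ℝ) ^ 2 - 1 := by
  have := isProbabilityMeasure_bernoulliPi (ι := ι) hr
  rw [measureReal_bernoulliPi_eq_pi hq hr h]
  refine (measureReal_mono fun W hW v => ?_).trans
    (measureReal_pi_bernoulliPi_forall_exists_eq_false_le hr₀ hr φ)
  obtain ⟨c, hc⟩ := hW v
  exact ⟨c, le_bot_iff.mp ((le_iSup W c (φ c v)).trans_eq hc)⟩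

end SecondMoment

section Config

/-- The point of index `c` in the configuration `v = (z, x)`: the `i`-th block of a configuration
consists of the translate `x i + z` of the shared point `z`, indexed by `none`, and of the
translates `x i + k i j` of the prescribed points `k i j`. -/
def configPoint {G I J : Type*} [Add G] (k : I → J → G) (c : I × Option J) (v : G × (I → G)) :
    G :=
  v.2 c.1 + c.2.elim v.1 (k c.1)

/-- The set encoded by `ω` contains every point of some configuration with prescribed points `k`. -/
def HasConfig {G I J : Type*} [Add G] (k : I → J → G) (ω : G → Bool) : Prop :=
  ∃ v, ∀ c, ω (configPoint k c v) = true

theorem isLowerSet_setOf_not_hasConfig {G I J : Type*} [Add G] (k : I → J → G) :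
    IsLowerSet {ω | ¬HasConfig k ω} :=
  fun _ _ hle hω ⟨v, hv⟩ => hω ⟨v, fun c => top_le_iff.mp ((hv c).ge.trans (hle _))⟩

variable {G I J : Type*} [AddCommGroup G] [Fintype G] [Fintype I] [Fintype J]

section Overlap

variable [DecidableEq G]

/-- The contribution of one block to the second moment: the sum of `s ^ (number of coincidences)`
over all pairs of translates of a block with `m` prescribed points, the shared points of the two
being `z` and `z'` respectively. -/
def blockOverlap (m : ℕ) (s : ℝ) (z z' : G) : ℝ :=
  ∑ x : G, ∑ x' : G, (if x + z = x' + z' then s else 1) * (if x = x' then s else 1) ^ m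

theorem blockOverlap_nonneg {s : ℝ} (hs : 0 ≤ s) (m : ℕ) (z z' : G) :
    0 ≤ blockOverlap m s z z' :=
  Finset.sum_nonneg fun x _ => Finset.sum_nonneg fun x' _ => by split_ifs <;> positivity

theorem blockOverlap_le_of_ne (m : ℕ) (s : ℝ) {z z' : G} (hz : z ≠ z') :
    blockOverlap m s z z' ≤
      (Fintype.card G : ℝ) ^ 2 + Fintype.card G * (s + s ^ m) := by
  have h_term (x x' : G) :
      (if x + z = x' + z' then s else 1) * (if x = x' then s else 1) ^ m ≤
        1 + (if x + z - z' = x' then s else 0) + (if x = x' then s ^ m else 0) := by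
    have h_excl (h₁ : x + z - z' = x') (h₂ : x = x') : False :=
      hz (add_left_cancel (sub_eq_iff_eq_add.mp (h₁.trans h₂.symm)))
    simp only [← sub_eq_iff_eq_add]
    split_ifs with h₁ h₂ h₂
    · exact (h_excl h₁ h₂).elim
    all_goals simp
  calc blockOverlap m s z z'
      ≤ ∑ x : G, ∑ x' : G,
          (1 + (if x + z - z' = x' then s else 0) + (if x = x' then s ^ m else 0)) :=
        Finset.sum_le_sum fun x _ => Finset.sum_le_sum fun x' _ => h_term x x'
    _ = (Fintype.card G : ℝ) ^ 2 + Fintype.card G * (s + s ^ m) := by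
        simp [Finset.sum_add_distrib]
        ring

theorem blockOverlap_self_le (m : ℕ) (s : ℝ) (z : G) :
    blockOverlap m s z z ≤ (Fintype.card G : ℝ) ^ 2 + Fintype.card G * s ^ (m + 1) := by
  have h_term (x x' : G) :
      (if x + z = x' + z then s else 1) * (if x = x' then s else 1) ^ m ≤
        1 + if x = x' then s ^ (m + 1) else 0 := by
    simp only [add_left_inj]
    split_ifs
    · linarith [pow_succ' s m]
    · simp
  calc blockOverlap m s z z
      ≤ ∑ x : G, ∑ x' : G, (1 + if x = x' then s ^ (m + 1) else 0) :=
        Finset.sum_le_sum fun x _ => Finset.sum_le_sum fun x' _ => h_term x x'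
    _ = (Fintype.card G : ℝ) ^ 2 + Fintype.card G * s ^ (m + 1) := by
        simp [Finset.sum_add_distrib]
        ring

theorem sum_prod_configPoint_eq [DecidableEq I] (k : I → J → G) (s : ℝ) :
    ∑ v, ∑ w, ∏ c, (if configPoint k c v = configPoint k c w then s else 1) =
      ∑ z : G, ∑ z' : G, blockOverlap (Fintype.card J) s z z' ^ Fintype.card I := by
  have h_split (v w : G × (I → G)) :
      ∏ c, (if configPoint k c v = configPoint k c w then s else 1) =
        ∏ i, (if v.2 i + v.1 = w.2 i + w.1 then s else 1) *
          (if v.2 i = w.2 i then s else 1) ^ Fintype.card J := by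
    simp only [configPoint, Fintype.prod_prod_type, Fintype.prod_option, Option.elim_none,
      Option.elim_some, add_left_inj, Finset.prod_const, Finset.card_univ]
    congr!
  have h_pow (z z' : G) : blockOverlap (Fintype.card J) s z z' ^ Fintype.card I =
      ∑ x : I → G, ∑ x' : I → G, ∏ i, (if x i + z = x' i + z' then s else 1) *
        (if x i = x' i then s else 1) ^ Fintype.card J := by
    rw [← Finset.card_univ (α := I), ← Finset.prod_const, blockOverlap, Fintype.prod_sum]
    exact Finset.sum_congr rfl fun x _ => Fintype.prod_sum _
  simp only [h_split, h_pow, Fintype.sum_prod_type]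
  exact Finset.sum_congr rfl fun z _ => Finset.sum_comm

theorem sum_prod_configPoint_le [DecidableEq I] (k : I → J → G) {s : ℝ} (hs : 0 ≤ s) :
    ∑ v, ∑ w, ∏ c, (if configPoint k c v = configPoint k c w then s else 1) ≤
      (Fintype.card G : ℝ) ^ 2 * ((Fintype.card G : ℝ) ^ 2 +
          Fintype.card G * (s + s ^ Fintype.card J)) ^ Fintype.card I +
        Fintype.card G * ((Fintype.card G : ℝ) ^ 2 +
          Fintype.card G * s ^ (Fintype.card J + 1)) ^ Fintype.card I := by
  set n := (Fintype.card G : ℝ)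
  set m := Fintype.card J
  set d := Fintype.card I
  have h_term (z z' : G) : blockOverlap m s z z' ^ d ≤
      (n ^ 2 + n * (s + s ^ m)) ^ d + if z = z' then (n ^ 2 + n * s ^ (m + 1)) ^ d else 0 := by
    split_ifs with hz
    · subst hz
      refine (pow_le_pow_left₀ (blockOverlap_nonneg hs m z z) (blockOverlap_self_le m s z) d).trans
        (le_add_of_nonneg_left ?_)
      positivity
    · rw [add_zero]
      exact pow_le_pow_left₀ (blockOverlap_nonneg hs m z z') (blockOverlap_le_of_ne m s hz) d
  calc ∑ v, ∑ w, ∏ c, (if configPoint k c v = configPoint k c w then s else 1)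
      = ∑ z : G, ∑ z' : G, blockOverlap m s z z' ^ d := sum_prod_configPoint_eq k s
    _ ≤ ∑ z : G, ∑ z' : G, ((n ^ 2 + n * (s + s ^ m)) ^ d +
          if z = z' then (n ^ 2 + n * s ^ (m + 1)) ^ d else 0) :=
        Finset.sum_le_sum fun z _ => Finset.sum_le_sum fun z' _ => h_term z z'
    _ = n ^ 2 * (n ^ 2 + n * (s + s ^ m)) ^ d + n * (n ^ 2 + n * s ^ (m + 1)) ^ d := by
        simp [Finset.sum_add_distrib, n]
        ring

end Overlap

theorem measureReal_not_hasConfig_le {q r : ℝ≥0} (hq : q ≤ 1) (hr₀ : 0 < r) (hr : r ≤ 1)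
    (h : 1 - q = (1 - r) ^ (Fintype.card I * (Fintype.card J + 1))) (k : I → J → G) :
    (bernoulliPi G q).real {ω | ¬HasConfig k ω} ≤
      (1 + ((r : ℝ)⁻¹ + (r : ℝ)⁻¹ ^ Fintype.card J) / Fintype.card G) ^ Fintype.card I - 1 +
        (1 + (r : ℝ)⁻¹ ^ (Fintype.card J + 1) / Fintype.card G) ^ Fintype.card I /
          Fintype.card G := by
  classical
  set n := (Fintype.card G : ℝ)
  set m := Fintype.card J
  set d := Fintype.card I
  set s : ℝ := (r : ℝ)⁻¹
  have hn₀ : 0 < n := Nat.cast_pos.mpr Fintype.card_pos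
  have h_event : {ω | ¬HasConfig k ω} = {ω | ∀ v, ∃ c, ω (configPoint k c v) = false} := by
    ext ω
    simp [HasConfig]
  have h_card : (Fintype.card (G × (I → G)) : ℝ) = n ^ (d + 1) := by
    simp [n, d, pow_succ']
  have h_factor (a : ℝ) : (n ^ 2 + n * a) ^ d = (n ^ 2) ^ d * (1 + a / n) ^ d := by
    rw [← mul_pow]
    congr 1
    field_simp
  calc (bernoulliPi G q).real {ω | ¬HasConfig k ω}
      ≤ (∑ v, ∑ w, ∏ c, if configPoint k c v = configPoint k c w then s else 1) /
          (n ^ (d + 1)) ^ 2 - 1 := by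
        rw [h_event, ← h_card]
        exact measureReal_bernoulliPi_forall_exists_eq_false_le hq hr₀ hr (by simpa using h) _
    _ ≤ (n ^ 2 * (n ^ 2 + n * (s + s ^ m)) ^ d + n * (n ^ 2 + n * s ^ (m + 1)) ^ d) /
          (n ^ (d + 1)) ^ 2 - 1 := by
        gcongr
        exact sum_prod_configPoint_le k (by positivity)
    _ = (1 + (s + s ^ m) / n) ^ d - 1 + (1 + s ^ (m + 1) / n) ^ d / n := by
        rw [h_factor, h_factor]
        field_simp
        ring

end Config

section Asymptotics

theorem pow_div_pow_le_of_le_rpow {n s M α δ : ℝ} (hn : 1 ≤ n) (hs : 0 ≤ s)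
    (hsM : s ≤ M * n ^ α) {i j : ℕ} (hij : α * j - i ≤ -δ) :
    s ^ j / n ^ i ≤ M ^ j * n ^ (-δ) := by
  have hn₀ : 0 < n := zero_lt_one.trans_le hn
  have hM : 0 ≤ M := nonneg_of_mul_nonneg_left (hs.trans hsM) (Real.rpow_pos_of_pos hn₀ α)
  calc s ^ j / n ^ i ≤ (M * n ^ α) ^ j / n ^ i := by gcongr
    _ = M ^ j * n ^ (α * j - i) := by
        rw [Real.rpow_sub hn₀, Real.rpow_mul_natCast hn₀.le, Real.rpow_natCast, mul_pow,
          mul_div_assoc]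
    _ ≤ M ^ j * n ^ (-δ) := by gcongr

theorem one_add_pow_sub_one_le {a A t : ℝ} (ha : 0 ≤ a) (hA : 0 ≤ A) (ht₀ : 0 ≤ t) (ht : t ≤ 1)
    (haA : a ≤ A * t) (d : ℕ) : (1 + a) ^ d - 1 ≤ (1 + A) ^ d * t := by
  have h_convex : ((1 - t) * 1 + t * (1 + A)) ^ d ≤ (1 - t) * 1 ^ d + t * (1 + A) ^ d :=
    (convexOn_pow d).2 (Set.mem_Ici.mpr zero_le_one) (Set.mem_Ici.mpr (by positivity))
      (sub_nonneg.mpr ht) ht₀ (sub_add_cancel 1 t)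
  have h_base : 1 + a ≤ (1 - t) * 1 + t * (1 + A) := by linarith
  calc (1 + a) ^ d - 1 ≤ ((1 - t) * 1 + t * (1 + A)) ^ d - 1 := by gcongr
    _ ≤ (1 - t) * 1 ^ d + t * (1 + A) ^ d - 1 := by gcongr
    _ ≤ (1 + A) ^ d * t := by rw [one_pow]; linarith

theorem one_add_pow_div_le {b B n t : ℝ} (hb : 0 ≤ b) (hn : 0 < n) (hnt : 1 / n ≤ t) {d : ℕ}
    (hbB : b ^ d / n ≤ B * t) : (1 + b) ^ d / n ≤ 2 ^ (d - 1) * (1 + B) * t :=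
  calc (1 + b) ^ d / n ≤ 2 ^ (d - 1) * (1 ^ d + b ^ d) / n := by
        gcongr
        exact add_pow_le zero_le_one hb d
    _ = 2 ^ (d - 1) * (1 / n + b ^ d / n) := by rw [one_pow]; ring
    _ ≤ 2 ^ (d - 1) * (t + B * t) := by gcongr
    _ = 2 ^ (d - 1) * (1 + B) * t := by ring

/-- The exponents of the error terms are `(4 / 9 - ε) - 1`, `2 (4 / 9 - ε) - 1`, `-1` and
`9 (4 / 9 - ε) - 4 = -9 ε`; the last one is what makes `4 / 9` the threshold. -/
theorem secondMoment_error_le {ε δ n s M : ℝ} (hδ : 0 ≤ δ) (hδ₁ : δ ≤ 1 / 9) (hδε : δ ≤ 9 * ε)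
    (hn : 1 ≤ n) (hs : 0 ≤ s) (hsM : s ≤ M * n ^ (4 / 9 - ε)) :
    (1 + (s + s ^ 2) / n) ^ 3 - 1 + (1 + s ^ 3 / n) ^ 3 / n ≤
      ((1 + (M + M ^ 2)) ^ 3 + 2 ^ 2 * (1 + M ^ 9)) * n ^ (-δ) := by
  have hn₀ : 0 < n := zero_lt_one.trans_le hn
  have hM : 0 ≤ M := nonneg_of_mul_nonneg_left (hs.trans hsM) (Real.rpow_pos_of_pos hn₀ _)
  have ht₀ : 0 ≤ n ^ (-δ) := Real.rpow_nonneg hn₀.le _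
  have ht₁ : n ^ (-δ) ≤ 1 := Real.rpow_le_one_of_one_le_of_nonpos hn (neg_nonpos.mpr hδ)
  have h_off_diag : (s + s ^ 2) / n ≤ (M + M ^ 2) * n ^ (-δ) := by
    have h₁ : s ^ 1 / n ^ 1 ≤ M ^ 1 * n ^ (-δ) :=
      pow_div_pow_le_of_le_rpow hn hs hsM (by norm_num; linarith)
    have h₂ : s ^ 2 / n ^ 1 ≤ M ^ 2 * n ^ (-δ) :=
      pow_div_pow_le_of_le_rpow hn hs hsM (by norm_num; linarith)
    rw [add_div, add_mul]
    simpa using add_le_add h₁ h₂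
  have h_diag : (s ^ 3 / n) ^ 3 / n ≤ M ^ 9 * n ^ (-δ) := by
    have h₉ : s ^ 9 / n ^ 4 ≤ M ^ 9 * n ^ (-δ) :=
      pow_div_pow_le_of_le_rpow hn hs hsM (by norm_num; linarith)
    exact (by field_simp : (s ^ 3 / n) ^ 3 / n = s ^ 9 / n ^ 4).trans_le h₉
  have h_inv : 1 / n ≤ n ^ (-δ) := by
    rw [one_div, ← Real.rpow_neg_one]
    exact Real.rpow_le_rpow_of_exponent_le hn (by linarith)
  rw [add_mul]
  exact add_le_add
    (one_add_pow_sub_one_le (by positivity) (by positivity) ht₀ ht₁ h_off_diag 3)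
    (one_add_pow_div_le (by positivity) hn₀ h_inv h_diag)

theorem measureReal_not_hasConfig_le_mul_rpow {G : Type*} [AddCommGroup G] [Fintype G] {q r : ℝ≥0}
    {ε δ M : ℝ} (hδ : 0 ≤ δ) (hδ₁ : δ ≤ 1 / 9) (hδε : δ ≤ 9 * ε) (hq : q ≤ 1)
    (hr : r ≤ 1) (hrM : (Fintype.card G : ℝ) ^ (-(4 : ℝ) / 9 + ε) ≤ M * r)
    (h : 1 - q = (1 - r) ^ 9) (k : Fin 3 → Fin 2 → G) :
    (bernoulliPi G q).real {ω | ¬HasConfig k ω} ≤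
      ((1 + (M + M ^ 2)) ^ 3 + 2 ^ 2 * (1 + M ^ 9)) * (Fintype.card G : ℝ) ^ (-δ) := by
  set n := (Fintype.card G : ℝ)
  have hn : 1 ≤ n := Nat.one_le_cast.mpr Fintype.card_pos
  have hn₀ : 0 < n := zero_lt_one.trans_le hn
  have hMr : 0 < M * r := (Real.rpow_pos_of_pos hn₀ _).trans_le hrM
  have hr₀ : 0 < r := pos_iff_ne_zero.mpr fun hr => by simp [hr] at hMr
  have hr_inv : (r : ℝ)⁻¹ ≤ M * n ^ (4 / 9 - ε) := by
    rw [show 4 / 9 - ε = -(-(4 : ℝ) / 9 + ε) by ring, Real.rpow_neg hn₀.le, ← div_eq_mul_inv,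
      inv_eq_one_div, div_le_div_iff₀ (NNReal.coe_pos.mpr hr₀) (Real.rpow_pos_of_pos hn₀ _),
      one_mul]
    exact hrM
  have h_moment := measureReal_not_hasConfig_le hq hr₀ hr (by simpa using h) k
  simp only [Fintype.card_fin] at h_moment
  exact h_moment.trans (secondMoment_error_le hδ hδ₁ hδε hn (by positivity) hr_inv)

theorem exists_forall_measureReal_not_hasConfig_le {ε : ℝ} (hε : 0 < ε) (D : ℝ) :
    ∃ C : ℝ, ∀ (G : Type*) [AddCommGroup G] [Fintype G] (p : ℝ≥0), p ≤ 1 →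
      (Fintype.card G : ℝ) ^ (-(4 : ℝ) / 9 + ε) ≤ p → ∀ k : Fin 3 → Fin 2 → G,
        (bernoulliPi G p).real {ω | ¬HasConfig k ω} ≤ C * (Fintype.card G : ℝ) ^ (-D) := by
  obtain ⟨δ, hδ, hδ₁, hδε⟩ : ∃ δ : ℝ, 0 < δ ∧ δ ≤ 1 / 9 ∧ δ ≤ 9 * ε :=
    ⟨min (1 / 9) (9 * ε), by positivity, min_le_left _ _, min_le_right _ _⟩
  obtain ⟨m, hm, hmD⟩ : ∃ m : ℕ, m ≠ 0 ∧ D ≤ δ * m := by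
    obtain ⟨m, hm⟩ := exists_nat_gt (max 0 (D / δ))
    rw [max_lt_iff, div_lt_iff₀' hδ] at hm
    exact ⟨m, Nat.cast_pos.mp hm.1 |>.ne', hm.2.le⟩
  set M : ℝ := m * 9
  set K : ℝ := (1 + (M + M ^ 2)) ^ 3 + 2 ^ 2 * (1 + M ^ 9)
  refine ⟨K ^ m, fun G _ _ p hp hpn k => ?_⟩
  set n := (Fintype.card G : ℝ)
  have hn : 1 ≤ n := Nat.one_le_cast.mpr Fintype.card_pos
  obtain ⟨q, r, hq, hr, hpr, h_pq, h_qr⟩ :=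
    exists_one_sub_eq_one_sub_pow_and hp hm (d := 9) (by norm_num)
  have hrM : n ^ (-(4 : ℝ) / 9 + ε) ≤ M * r := hpn.trans (NNReal.coe_le_coe.mpr hpr)
  calc (bernoulliPi G p).real {ω | ¬HasConfig k ω}
      ≤ (bernoulliPi G q).real {ω | ¬HasConfig k ω} ^ m :=
        measureReal_bernoulliPi_le_pow_of_isLowerSet hp hq h_pq (isLowerSet_setOf_not_hasConfig k)
    _ ≤ (K * n ^ (-δ)) ^ m := by
        gcongr
        exact measureReal_not_hasConfig_le_mul_rpow hδ.le hδ₁ hδε hq hr hrM h_qr k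
    _ = K ^ m * n ^ (-δ * m) := by
        rw [mul_pow, Real.rpow_mul_natCast (zero_le_one.trans hn)]
    _ ≤ K ^ m * n ^ (-D) := by
        gcongr
        linarith

/-- The prescribed points of the three blocks of the configurations counted by `Lam N 1 a b c`: each
of its factors `Lam N 0` retains two of the points `a`, `b`, `c`. -/
def trianglePoints {G : Type*} (a b c : G) : Fin 3 → Fin 2 → G :=
  ![![a, b], ![a, c], ![b, c]]

theorem exists_forall_measureReal_exists_not_hasConfig_le {ε : ℝ} (hε : 0 < ε) (D : ℝ) :
    ∃ C : ℝ, ∀ (G : Type*) [AddCommGroup G] [Fintype G] (p : ℝ≥0), p ≤ 1 →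
      (Fintype.card G : ℝ) ^ (-(4 : ℝ) / 9 + ε) ≤ p →
        (bernoulliPi G p).real {ω | ∃ a b c, ¬HasConfig (trianglePoints a b c) ω} ≤
          C * (Fintype.card G : ℝ) ^ (-D) := by
  obtain ⟨C, hC⟩ := exists_forall_measureReal_not_hasConfig_le hε (3 + D)
  refine ⟨C, fun G _ _ p hp hpn => ?_⟩
  have := isProbabilityMeasure_bernoulliPi (ι := G) hp
  set n := (Fintype.card G : ℝ)
  have hn₀ : 0 < n := Nat.cast_pos.mpr Fintype.card_pos
  have h_union : {ω | ∃ a b c, ¬HasConfig (trianglePoints a b c) ω} =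
      ⋃ v : G × G × G, {ω | ¬HasConfig (trianglePoints v.1 v.2.1 v.2.2) ω} := by
    ext
    simp
  calc (bernoulliPi G p).real {ω | ∃ a b c, ¬HasConfig (trianglePoints a b c) ω}
      ≤ ∑ v : G × G × G,
          (bernoulliPi G p).real {ω | ¬HasConfig (trianglePoints v.1 v.2.1 v.2.2) ω} :=
        h_union ▸ measureReal_iUnion_fintype_le _
    _ ≤ ∑ _v : G × G × G, C * n ^ (-(3 + D)) := Finset.sum_le_sum fun _ _ => hC G p hp hpn _
    _ = C * (n ^ 3 * n ^ (-(3 + D))) := by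
        simp [n]
        ring
    _ = C * n ^ (-D) := by
        rw [← Real.rpow_natCast, ← Real.rpow_add hn₀]
        norm_num

end Asymptotics

section Lam

variable {N : ℕ} {t : ZMod N → ℝ}

theorem Lam_zero_nonneg (ht : 0 ≤ t) (a b c : ZMod N) : 0 ≤ Lam N 0 a b c t :=
  finsum_nonneg fun _ => mul_nonneg (mul_nonneg (ht _) (ht _)) (ht _)

variable [NeZero N]

theorem Lam_zero_pos (ht : 0 ≤ t) {a b c x : ZMod N} (ha : 0 < t (x + a)) (hb : 0 < t (x + b))
    (hc : 0 < t (x + c)) : 0 < Lam N 0 a b c t :=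
  finsum_pos (fun _ => mul_nonneg (mul_nonneg (ht _) (ht _)) (ht _))
    ⟨x, mul_pos (mul_pos ha hb) hc⟩ (Set.toFinite _)

theorem Lam_one_pos (ht : 0 ≤ t) {a b c z : ZMod N} (hc : 0 < Lam N 0 a b z t)
    (hb : 0 < Lam N 0 a z c t) (ha : 0 < Lam N 0 z b c t) : 0 < Lam N 1 a b c t :=
  finsum_pos (fun _ => mul_nonneg (mul_nonneg (Lam_zero_nonneg ht _ _ _)
    (Lam_zero_nonneg ht _ _ _)) (Lam_zero_nonneg ht _ _ _))
    ⟨z, mul_pos (mul_pos hc hb) ha⟩ (Set.toFinite _)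

theorem Lam_one_indicator_pos_of_hasConfig {a b c : ZMod N} {ω : ZMod N → Bool}
    (h : HasConfig (trianglePoints a b c) ω) :
    0 < Lam N 1 a b c (Set.indicator {x : ZMod N | ω x = true} fun _ => (1 : ℝ)) := by
  obtain ⟨⟨z, x⟩, hzx⟩ := h
  set t : ZMod N → ℝ := Set.indicator {x : ZMod N | ω x = true} fun _ => 1
  have ht : 0 ≤ t := Set.indicator_nonneg fun _ _ => zero_le_one
  have h_shared (i : Fin 3) : 0 < t (x i + z) := by
    simp [t, show ω (x i + z) = true from hzx (i, none)]
  have h_point (i : Fin 3) (j : Fin 2) : 0 < t (x i + trianglePoints a b c i j) := by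
    simp [t, show ω (x i + trianglePoints a b c i j) = true from hzx (i, some j)]
  exact Lam_one_pos ht
    (Lam_zero_pos ht (h_point 0 0) (h_point 0 1) (h_shared 0))
    (Lam_zero_pos ht (h_point 1 0) (h_shared 1) (h_point 1 1))
    (Lam_zero_pos ht (h_shared 2) (h_point 2 0) (h_point 2 1))

theorem randomSubsetMeasure_eq_bernoulliPi (p : ℝ≥0) :
    randomSubsetMeasure N p = bernoulliPi (ZMod N) p :=
  dif_neg (NeZero.ne N)

end Lam

theorem tendsto_measure_one_of_measureReal_compl_le {α : Type*} {l : Filter α} {Ω : α → Type*}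
    [∀ i, MeasurableSpace (Ω i)] {μ : ∀ i, Measure (Ω i)} {S : ∀ i, Set (Ω i)} {f : α → ℝ}
    (hμ : ∀ᶠ i in l, IsProbabilityMeasure (μ i)) (hSf : ∀ᶠ i in l, (μ i).real (S i)ᶜ ≤ f i)
    (hf : Tendsto f l (nhds 0)) : Tendsto (fun i => μ i (S i)) l (nhds 1) := by
  have h_lower : Tendsto (fun i => 1 - ENNReal.ofReal (f i)) l (nhds 1) := by
    simpa using ENNReal.Tendsto.sub (tendsto_const_nhds (x := 1)) (ENNReal.tendsto_ofReal hf)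
      (.inl ENNReal.one_ne_top)
  refine tendsto_of_tendsto_of_tendsto_of_le_of_le' h_lower tendsto_const_nhds ?_
    (hμ.mono fun i _ => prob_le_one)
  filter_upwards [hμ, hSf] with i _ hi
  rw [tsub_le_iff_right]
  calc (1 : ENNReal) = μ i Set.univ := measure_univ.symm
    _ ≤ μ i (S i) + μ i (S i)ᶜ := measure_univ_le_add_compl _
    _ ≤ μ i (S i) + ENNReal.ofReal (f i) := by
        gcongr
        rw [← ofReal_measureReal]
        exact ENNReal.ofReal_le_ofReal hi

theorem randomSubsetMeasure_apply_le_one (N : ℕ) {p : ℝ≥0} (hp : p ≤ 1)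
    (S : Set (ZMod N → Bool)) : randomSubsetMeasure N p S ≤ 1 := by
  rcases eq_or_ne N 0 with rfl | hN
  · simp [randomSubsetMeasure]
  · have : NeZero N := ⟨hN⟩
    have := isProbabilityMeasure_bernoulliPi (ι := ZMod N) hp
    exact randomSubsetMeasure_eq_bernoulliPi (N := N) p ▸ prob_le_one

theorem tendsto_randomSubsetMeasure_one_mono {p : ℕ → ℝ≥0} (hp : ∀ᶠ N in atTop, p N ≤ 1)
    {S T : ∀ N : ℕ, Set (ZMod N → Bool)}
    (hS : Tendsto (fun N => randomSubsetMeasure N (p N) (S N)) atTop (nhds 1))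
    (hST : ∀ N, S N ⊆ T N) :
    Tendsto (fun N => randomSubsetMeasure N (p N) (T N)) atTop (nhds 1) :=
  tendsto_of_tendsto_of_tendsto_of_le_of_le' hS tendsto_const_nhds
    (.of_forall fun N => measure_mono (hST N))
    (hp.mono fun N hN => randomSubsetMeasure_apply_le_one N hN _)

theorem eventually_toNNReal_rpow_le_one {α : ℝ} (hα : α ≤ 0) :
    ∀ᶠ N : ℕ in atTop, Real.toNNReal ((N : ℝ) ^ α) ≤ 1 := by
  filter_upwards [eventually_ge_atTop 1] with N hN
  exact Real.toNNReal_le_one.mpr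
    (Real.rpow_le_one_of_one_le_of_nonpos (Nat.one_le_cast.mpr hN) hα)

theorem Lam_one_pos_whp_general (ε : ℝ) (hε : 0 < ε) (p : ℕ → ℝ≥0)
    (hp : ∀ᶠ N in atTop, p N ≤ 1)
    (hpN : ∀ᶠ N : ℕ in atTop, (N : ℝ) ^ (-(4 : ℝ) / 9 + ε) ≤ p N) :
    Tendsto
      (fun N : ℕ => randomSubsetMeasure N (p N)
        {ω | ∀ a b c : ZMod N,
          0 < Lam N 1 a b c (Set.indicator {x : ZMod N | ω x = true} fun _ => (1 : ℝ))})
      atTop (nhds 1) := by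
  obtain ⟨C, hC⟩ := exists_forall_measureReal_exists_not_hasConfig_le hε 1
  have h_lim : Tendsto (fun N : ℕ => C * (N : ℝ) ^ (-1 : ℝ)) atTop (nhds 0) := by
    simpa using ((tendsto_rpow_neg_atTop one_pos).comp tendsto_natCast_atTop_atTop).const_mul C
  refine tendsto_measure_one_of_measureReal_compl_le ?_ ?_ h_lim
  · filter_upwards [hp, eventually_ne_atTop 0] with N hp hN
    have : NeZero N := ⟨hN⟩
    exact randomSubsetMeasure_eq_bernoulliPi (N := N) (p N) ▸ isProbabilityMeasure_bernoulliPi hp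
  · filter_upwards [hp, hpN, eventually_ne_atTop 0] with N hp hpN hN
    have : NeZero N := ⟨hN⟩
    have := isProbabilityMeasure_bernoulliPi (ι := ZMod N) hp
    have h_fail := hC (ZMod N) (p N) hp (by rwa [ZMod.card])
    rw [ZMod.card] at h_fail
    rw [randomSubsetMeasure_eq_bernoulliPi]
    refine (measureReal_mono fun ω hω => ?_).trans h_fail
    contrapose! hω
    simp only [Set.mem_ofPred_eq, not_exists, not_not, Set.notMem_compl_iff] at hω ⊢
    exact fun a b c => Lam_one_indicator_pos_of_hasConfig (hω a b c)

theorem Lam_one_pos_whp (ε : ℝ) (hε0 : 0 < ε) (hε : ε < 4/9) :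
    Tendsto
      (fun N : ℕ =>
        randomSubsetMeasure N (Real.toNNReal ((N : ℝ) ^ (-(4:ℝ)/9 + ε)))
          {ω | ∀ a b c : ZMod N, a ≠ b → a ≠ c → b ≠ c →
            0 < Lam N 1 a b c (Set.indicator {x : ZMod N | ω x = true} fun _ => (1 : ℝ))})
      atTop (nhds 1) := by
  have hp := eventually_toNNReal_rpow_le_one (α := -(4 : ℝ) / 9 + ε) (by linarith)
  have h_all := Lam_one_pos_whp_general ε hε0 _ hp (.of_forall fun N => Real.le_coe_toNNReal _)
  exact tendsto_randomSubsetMeasure_one_mono hp h_all fun N ω hω a b c _ _ _ =>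
    hω a b c
end

section
/- Let ε be a real number with 0 < ε < 1/2, and for each N let p = p(N) = N^{-1/2+ε}. Then there exists a natural number i = i(ε), depending only on ε, such that if A is a random subset of ZMod N with parameter p, then with high probability (as N → ∞), Λ^i_{a,b,c}(A) > 0 simultaneously for all pairwise distinct a, b, c ∈ ZMod N. -/
open MeasureTheory Filter

/-! Join `u` and `v` when `u + v ∈ A`. If `a` and `b` have a common neighbour `x`, and a walk of
`2 * i + 1` steps from `b`, with vertices alternately adjacent to `c` and to `x`, ends at a
neighbour of `a`, then `Λ^i_{a,b,c}(A) > 0`: each level of the recursion peels two steps off the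
walk.

Such walks are found by sprinkling. Write `N = M ^ (6 * K)` with `K = 2 * i + 1`, and view `A` as
a union of boundedly many independent `q`-random layers, where `q = M ^ 2 * N ^ (-1/2)`. By a
second moment bound two fresh layers multiply the number of possible endpoints of the walk by
`M ^ 3`, so that after `K` steps there are `N ^ (1/2)` of them, and one more layer joins some of
these to `a`. A given triple fails with probability `O(1 / M)`, hence `O(M ^ (-18 * K - 1))` after
`18 * K + 1` independent attempts, and a union bound over the `N ^ 3 = M ^ (18 * K)` triples
finishes the proof. -/

open ProbabilityTheory unitInterval
open scoped Pointwise Finset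

lemma eq_bernoulliMeasure_of_real_false {μ : Measure Prop} [IsProbabilityMeasure μ] {p : I}
    (h : μ.real {False} = σ p) : μ = Ber(True, False, p) := by
  have hfalse : μ.real {False} = Ber(True, False, p).real {False} := by
    rw [h, bernoulliMeasure_real_apply_of_notMem_of_mem p (by simp) (by simp) (by simp),
      coe_symm_eq]
  refine Measure.ext_of_singleton fun P ↦ (measureReal_eq_measureReal_iff).1 ?_
  by_cases hP : P
  · have htrue : ({P} : Set Prop) = {False}ᶜ := by ext; simp [hP]
    rw [htrue, probReal_compl_eq_one_sub (by simp), probReal_compl_eq_one_sub (by simp), hfalse]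
  · rwa [eq_false hP]

lemma map_or_prod_bernoulliMeasure (q r : I) :
    (Ber(True, False, q).prod Ber(True, False, r)).map (fun P ↦ P.1 ∨ P.2)
      = Ber(True, False, σ (σ q * σ r)) := by
  have hor : Measurable fun P : Prop × Prop ↦ P.1 ∨ P.2 := by fun_prop
  have := Measure.isProbabilityMeasure_map
    (μ := Ber(True, False, q).prod Ber(True, False, r)) hor.aemeasurable
  have hfalse : (fun P : Prop × Prop ↦ P.1 ∨ P.2) ⁻¹' {False} = {False} ×ˢ {False} := by
    ext ⟨P, Q⟩; simp
  refine eq_bernoulliMeasure_of_real_false ?_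
  rw [map_measureReal_apply hor (by simp), hfalse, measureReal_prod_prod,
    bernoulliMeasure_real_apply_of_notMem_of_mem q (by simp) (by simp) (by simp),
    bernoulliMeasure_real_apply_of_notMem_of_mem r (by simp) (by simp) (by simp), symm_symm]
  rfl

lemma ncard_inter_eq_sum_indicator {α : Type*} (A : Set α) (D : Finset α) :
    ((A ∩ D).ncard : ℝ) = (∑ i ∈ D, {A : Set α | i ∈ A}.indicator 1) A := by
  classical
  have hfilter : A ∩ D = ({i ∈ D | i ∈ A} : Finset α) := by ext; simp [and_comm]
  rw [hfilter, Set.ncard_coe_finset]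
  simp [Set.indicator_apply]

lemma integral_ncard {Ω : Type*} [MeasurableSpace Ω] {μ : Measure Ω} [IsFiniteMeasure μ]
    {α : Type*} [Fintype α] {F : Ω → Set α} (hF : ∀ i, MeasurableSet {ω | i ∈ F ω}) :
    ∫ ω, ((F ω).ncard : ℝ) ∂μ = ∑ i, μ.real {ω | i ∈ F ω} := by
  have hsum (ω : Ω) : ((F ω).ncard : ℝ) = ∑ i, {ω | i ∈ F ω}.indicator 1 ω := by
    rw [← Set.inter_univ (F ω), ← Finset.coe_univ, ncard_inter_eq_sum_indicator, Finset.sum_apply]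
    rfl
  simp_rw [hsum]
  rw [integral_finsetSum _ fun i _ ↦ (integrable_const 1).indicator (hF i)]
  simp [integral_indicator_one, hF]

lemma variance_indicator_one_le {Ω : Type*} [MeasurableSpace Ω] {μ : Measure Ω}
    [IsProbabilityMeasure μ] {S : Set Ω} (hS : MeasurableSet S) :
    Var[S.indicator 1; μ] ≤ μ.real S := by
  refine (variance_le_expectation_sq (measurable_one.indicator hS).aestronglyMeasurable).trans_eq ?_
  rw [← integral_indicator_one hS]
  congr 1 with ω
  by_cases hω : ω ∈ S <;> simp [hω]

lemma prod_real_le_add {Ω Ω' : Type*} [MeasurableSpace Ω] [MeasurableSpace Ω'] {μ : Measure Ω}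
    {ν : Measure Ω'} [IsProbabilityMeasure μ] [IsProbabilityMeasure ν] {S : Set (Ω × Ω')}
    (hS : MeasurableSet S) {G : Set Ω} (hG : MeasurableSet G) {δ : ℝ} (hδ : 0 ≤ δ)
    (h : ∀ x ∈ G, ν.real (Prod.mk x ⁻¹' S) ≤ δ) : (μ.prod ν).real S ≤ μ.real Gᶜ + δ := by
  suffices (μ.prod ν) S ≤ μ Gᶜ + ENNReal.ofReal δ by
    rw [measureReal_def, measureReal_def, ← ENNReal.toReal_ofReal hδ,
      ← ENNReal.toReal_add (by finiteness) (by finiteness)]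
    exact ENNReal.toReal_mono (by finiteness) this
  calc (μ.prod ν) S = ∫⁻ x, ν (Prod.mk x ⁻¹' S) ∂μ := Measure.prod_apply hS
    _ ≤ ∫⁻ x, Gᶜ.indicator 1 x + ENNReal.ofReal δ ∂μ := by
      refine lintegral_mono fun x ↦ ?_
      by_cases hx : x ∈ G
      · simpa [hx] using (ENNReal.le_ofReal_iff_toReal_le (by finiteness) hδ).2 (h x hx)
      · exact le_add_right (by simp [hx, prob_le_one])
    _ = μ Gᶜ + ENNReal.ofReal δ := by
      rw [lintegral_add_right _ measurable_const, lintegral_indicator_one hG.compl]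
      simp

/-! ### Random subsets and sprinkling -/

section RandomSubset

variable {α : Type*}

lemma setBernoulli_univ_eq_map_infinitePi (p : I) :
    setBer((Set.univ : Set α), p)
      = (Measure.infinitePi fun _ : α ↦ Ber(True, False, p)).map fun P ↦ {i | P i} := by
  simp only [setBernoulli_eq_map, bernoulliMeasure_def, Set.mem_univ]

lemma map_mem_setBernoulli_univ (p : I) :
    setBer((Set.univ : Set α), p).map (fun A i ↦ i ∈ A)
      = Measure.infinitePi fun _ : α ↦ Ber(True, False, p) := by
  rw [setBernoulli_univ_eq_map_infinitePi]
  exact MeasurableEquiv.setOfPred.symm.map_map_symm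

lemma hasLaw_mem_setBernoulli_univ (p : I) (i : α) :
    HasLaw (i ∈ ·) Ber(True, False, p) setBer((Set.univ : Set α), p) where
  aemeasurable := by fun_prop
  map_eq := by
    rw [← Measure.infinitePi_map_eval (fun _ : α ↦ Ber(True, False, p)) i,
      ← map_mem_setBernoulli_univ, Measure.map_map (by fun_prop) (by fun_prop)]
    rfl

lemma iIndepFun_mem_setBernoulli_univ (p : I) :
    iIndepFun (fun (i : α) (A : Set α) ↦ i ∈ A) setBer(Set.univ, p) := by
  have hlaw := hasLaw_mem_setBernoulli_univ (α := α) p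
  rw [iIndepFun_iff_map_fun_eq_infinitePi_map₀ (by fun_prop), map_mem_setBernoulli_univ]
  simp_rw [(hlaw _).map_eq]

lemma setBernoulli_univ_real_mem (p : I) (i : α) :
    setBer((Set.univ : Set α), p).real {A | i ∈ A} = p := by
  have hmem : {A : Set α | i ∈ A} = (i ∈ ·) ⁻¹' {True} := by ext; simp
  rw [hmem, ← map_measureReal_apply (by fun_prop) (by simp),
    (hasLaw_mem_setBernoulli_univ p i).map_eq,
    bernoulliMeasure_real_apply_of_mem_of_notMem p (by simp) (by simp) (by simp)]

lemma setBernoulli_univ_real_mem_and_mem (p : I) {i j : α} (hij : i ≠ j) :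
    setBer((Set.univ : Set α), p).real {A | i ∈ A ∧ j ∈ A} = p ^ 2 := by
  have hmem (k : α) : {A : Set α | k ∈ A} = (k ∈ ·) ⁻¹' {True} := by ext; simp
  have hindep := ((iIndepFun_mem_setBernoulli_univ p).indepFun hij).measure_inter_preimage_eq_mul
    {True} {True} (by simp) (by simp)
  rw [← hmem, ← hmem] at hindep
  rw [Set.ofPred_and, measureReal_def, hindep, ENNReal.toReal_mul, ← measureReal_def,
    ← measureReal_def, setBernoulli_univ_real_mem, setBernoulli_univ_real_mem, sq]

lemma pairwise_indepFun_indicator_mem (p : I) :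
    Pairwise fun i j : α ↦ {A | i ∈ A}.indicator (1 : Set α → ℝ)
      ⟂ᵢ[setBer(Set.univ, p)] {A | j ∈ A}.indicator (1 : Set α → ℝ) := fun _ _ hij ↦
  ((iIndepFun_mem_setBernoulli_univ p).indepFun hij).comp
    (φ := {P | P}.indicator (1 : Prop → ℝ)) (ψ := {P | P}.indicator (1 : Prop → ℝ))
    .of_discrete .of_discrete

/-- The law of the union of `k` independent `q`-random subsets of `α`. Each of the `k` layers is
missed by a given point with probability `1 - q`, so the union is a `1 - (1 - q) ^ k`-random
subset. -/
noncomputable def sprinkling (α : Type*) (q : I) (k : ℕ) : Measure (Set α) :=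
  setBer(Set.univ, σ (σ q ^ k))

instance (q : I) (k : ℕ) : IsProbabilityMeasure (sprinkling α q k) :=
  inferInstanceAs (IsProbabilityMeasure setBer(_, _))

lemma sprinkling_one (q : I) : sprinkling α q 1 = setBer(Set.univ, q) := by
  rw [sprinkling, pow_one, symm_symm]

variable [Finite α]

lemma map_union_prod_setBernoulli_univ (q r : I) :
    (setBer((Set.univ : Set α), q).prod setBer(Set.univ, r)).map (fun A ↦ A.1 ∪ A.2)
      = setBer(Set.univ, σ (σ q * σ r)) := by
  have := Fintype.ofFinite α
  have hprod := (measurePreserving_arrowProdEquivProdArrow Prop Prop α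
    (fun _ ↦ Ber(True, False, q)) (fun _ ↦ Ber(True, False, r))).map_eq
  simp only [← Measure.infinitePi_eq_pi] at hprod
  simp only [setBernoulli_univ_eq_map_infinitePi]
  rw [Measure.map_prod_map _ _ (by fun_prop) (by fun_prop), ← hprod,
    ← map_or_prod_bernoulliMeasure,
    ← Measure.infinitePi_map_pi (f := fun _ (P : Prop × Prop) ↦ P.1 ∨ P.2) _ (by fun_prop),
    Measure.map_map (by fun_prop) (by fun_prop), Measure.map_map (by fun_prop) (by fun_prop),
    Measure.map_map (by fun_prop) (by fun_prop)]
  rfl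

lemma setBernoulli_univ_real_compl_le_mul (q r : I) {Q : Set (Set α)} (hQ : IsUpperSet Q) :
    setBer((Set.univ : Set α), σ (σ q * σ r)).real Qᶜ
      ≤ setBer(Set.univ, q).real Qᶜ * setBer(Set.univ, r).real Qᶜ := by
  rw [← map_union_prod_setBernoulli_univ, map_measureReal_apply .of_discrete .of_discrete,
    ← measureReal_prod_prod]
  refine measureReal_mono fun A hA ↦ ⟨fun h ↦ hA (hQ ?_ h), fun h ↦ hA (hQ ?_ h)⟩
  exacts [Set.subset_union_left, Set.subset_union_right]

lemma setBernoulli_univ_real_compl_anti {p p' : I} (hp : p ≤ p') {Q : Set (Set α)}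
    (hQ : IsUpperSet Q) :
    setBer((Set.univ : Set α), p').real Qᶜ ≤ setBer(Set.univ, p).real Qᶜ := by
  have hσ : (σ p' : ℝ) ≤ σ p := symm_le_symm.2 hp
  obtain ⟨s, hs⟩ : ∃ s, σ p' = σ p * σ s := by
    refine ⟨σ ⟨σ p' / σ p, div_mem nonneg' nonneg' hσ⟩, ?_⟩
    rw [symm_symm]
    exact Subtype.ext (mul_div_cancel_of_imp' fun h ↦ (h ▸ hσ).antisymm nonneg').symm
  rw [← symm_symm p', hs]
  exact (setBernoulli_univ_real_compl_le_mul p s hQ).trans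
    (mul_le_of_le_one_right measureReal_nonneg measureReal_le_one)

lemma map_union_prod_sprinkling (q : I) (k l : ℕ) :
    ((sprinkling α q k).prod (sprinkling α q l)).map (fun A ↦ A.1 ∪ A.2)
      = sprinkling α q (k + l) := by
  simp only [sprinkling, map_union_prod_setBernoulli_univ, symm_symm, pow_add]

lemma sprinkling_add_real_le (q : I) (k l : ℕ) {B G : Set (Set α)} {δ : ℝ} (hδ : 0 ≤ δ)
    (h : ∀ A ∈ G, (sprinkling α q l).real {X | A ∪ X ∈ B} ≤ δ) :
    (sprinkling α q (k + l)).real B ≤ (sprinkling α q k).real Gᶜ + δ := by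
  rw [← map_union_prod_sprinkling, map_measureReal_apply .of_discrete .of_discrete]
  exact prod_real_le_add .of_discrete .of_discrete hδ h

lemma sprinkling_mul_real_compl_le_pow (q : I) (k m : ℕ) {Q : Set (Set α)} (hQ : IsUpperSet Q) :
    (sprinkling α q (m * k)).real Qᶜ ≤ (sprinkling α q k).real Qᶜ ^ m := by
  induction m with
  | zero => simp
  | succ m ih =>
    calc (sprinkling α q ((m + 1) * k)).real Qᶜ
        ≤ (sprinkling α q (m * k)).real Qᶜ * (sprinkling α q k).real Qᶜ := by
          rw [add_one_mul]
          simpa only [sprinkling, symm_symm, pow_add] using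
            setBernoulli_univ_real_compl_le_mul (σ (σ q ^ (m * k))) (σ (σ q ^ k)) hQ
      _ ≤ (sprinkling α q k).real Qᶜ ^ (m + 1) := by
          rw [pow_succ]
          gcongr

lemma setBernoulli_univ_real_compl_le_sprinkling {p q : I} {k : ℕ} (hp : k * (q : ℝ) ≤ p)
    {Q : Set (Set α)} (hQ : IsUpperSet Q) :
    setBer(Set.univ, p).real Qᶜ ≤ (sprinkling α q k).real Qᶜ := by
  refine setBernoulli_univ_real_compl_anti (Subtype.coe_le_coe.1 ?_) hQ
  have hq : (1 : ℝ) + k * (-q) ≤ (1 + -q) ^ k := one_add_mul_le_pow (by linarith [q.2.2]) k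
  have hσ : ((σ (σ q ^ k) : I) : ℝ) = 1 - (1 - q) ^ k := rfl
  rw [hσ]
  linear_combination hp + hq

lemma setBernoulli_univ_real_ncard_inter_lt_le (q : I) (D : Set α) :
    setBer((Set.univ : Set α), q).real {A | ((A ∩ D).ncard : ℝ) < q * D.ncard / 2}
      ≤ 4 / (q * D.ncard) := by
  lift D to Finset α using D.toFinite
  rw [Set.ncard_coe_finset]
  set μ := setBer((Set.univ : Set α), q)
  set X : α → Set α → ℝ := fun i ↦ {A | i ∈ A}.indicator 1
  rcases (mul_nonneg q.2.1 (#D).cast_nonneg : 0 ≤ q * (#D : ℝ)).eq_or_lt' with h0 | hpos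
  · simp [h0, (Nat.cast_nonneg _).not_gt]
  have hmean : μ[∑ i ∈ D, X i] = q * (#D : ℝ) := by
    simp_rw [Finset.sum_apply]
    rw [integral_finsetSum _ fun i _ ↦ Integrable.of_finite]
    simp_rw [X, integral_indicator_one (MeasurableSet.of_discrete), μ, setBernoulli_univ_real_mem]
    simp [mul_comm]
  have hvar : Var[∑ i ∈ D, X i; μ] ≤ q * (#D : ℝ) := by
    rw [IndepFun.variance_sum (fun _ _ ↦ .of_discrete)
      fun i _ j _ hij ↦ pairwise_indepFun_indicator_mem q hij]
    calc (∑ i ∈ D, Var[X i; μ]) ≤ ∑ i ∈ D, μ.real {A | i ∈ A} :=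
          Finset.sum_le_sum fun i _ ↦ variance_indicator_one_le .of_discrete
      _ = q * (#D : ℝ) := by simp [μ, setBernoulli_univ_real_mem, mul_comm]
  calc μ.real {A | ((A ∩ D).ncard : ℝ) < q * #D / 2}
      ≤ μ.real {A | (q * #D / 2 : ℝ) ≤ |(∑ i ∈ D, X i) A - μ[∑ i ∈ D, X i]|} := by
        refine measureReal_mono fun A hA ↦ ?_
        rw [Set.mem_ofPred_eq, ncard_inter_eq_sum_indicator] at hA
        rw [Set.mem_ofPred_eq, hmean]
        exact le_abs.2 (.inr (by linarith))
    _ ≤ Var[∑ i ∈ D, X i; μ] / (q * #D / 2) ^ 2 :=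
        ENNReal.toReal_le_of_le_ofReal (div_nonneg (variance_nonneg _ _) (sq_nonneg _))
          (meas_ge_le_variance_div_sq .of_discrete (half_pos hpos))
    _ ≤ (q * #D : ℝ) / (q * #D / 2) ^ 2 := by gcongr
    _ = 4 / (q * #D) := by field_simp; norm_num

end RandomSubset

/-! ### Walks in the sum graph of a random set -/

lemma sum_ncard_le_ncard_biUnion_add_sum_offDiag {ι α : Type*} [Finite α]
    (s : Finset ι) (f : ι → Set α) :
    ∑ i ∈ s, (f i).ncard ≤ (⋃ i ∈ s, f i).ncard + ∑ x ∈ s.offDiag, (f x.1 ∩ f x.2).ncard := by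
  classical
  induction s using Finset.induction_on with
  | empty => simp
  | insert a s ha ih =>
    have hinter : (f a ∩ ⋃ i ∈ s, f i).ncard ≤ ∑ i ∈ s, (f a ∩ f i).ncard := by
      rw [Set.inter_iUnion₂]
      exact s.set_ncard_biUnion_le _
    have hunion := Set.ncard_union_add_ncard_inter (f a) (⋃ i ∈ s, f i)
    have hoffDiag : ∑ x ∈ s.offDiag, (f x.1 ∩ f x.2).ncard + ∑ i ∈ s, (f a ∩ f i).ncard
        ≤ ∑ x ∈ (insert a s).offDiag, (f x.1 ∩ f x.2).ncard := by
      have hdisj : Disjoint s.offDiag ({a} ×ˢ s) := by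
        simp only [Finset.disjoint_left, Finset.mem_offDiag, Finset.mem_product,
          Finset.mem_singleton]
        grind
      calc _ = ∑ x ∈ s.offDiag ∪ {a} ×ˢ s, (f x.1 ∩ f x.2).ncard := by
            rw [Finset.sum_union hdisj, Finset.sum_product, Finset.sum_singleton]
        _ ≤ _ := by
            rw [Finset.offDiag_insert ha]
            exact Finset.sum_le_sum_of_subset Finset.subset_union_left
    rw [Finset.sum_insert ha, Finset.set_biUnion_insert]
    lia

lemma exists_subset_ncard_le_two_mul {α : Type*} {S : Set α} {t : ℝ} (ht : 1 ≤ t)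
    (hS : t ≤ S.ncard) : ∃ Y ⊆ S, t ≤ Y.ncard ∧ Y.ncard ≤ 2 * t := by
  obtain ⟨Y, hYS, hY⟩ := Set.exists_subset_card_eq (Nat.ceil_le.2 hS)
  refine ⟨Y, hYS, hY ▸ Nat.le_ceil t, ?_⟩
  rw [hY]
  linarith [Nat.ceil_lt_add_one (zero_le_one.trans ht)]

section Growth

variable {G : Type*} [AddCommGroup G]

lemma mem_sub_singleton {A : Set G} {w y : G} : w ∈ A - {y} ↔ w + y ∈ A := by
  simp [Set.sub_singleton, sub_eq_iff_eq_add]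

lemma mem_sub_iff_exists_mem_sub_singleton {A Z : Set G} {a : G} :
    a ∈ A - Z ↔ ∃ z ∈ Z, z ∈ A - {a} := by
  simp_rw [mem_sub_singleton]
  constructor
  · rintro ⟨y, hy, z, hz, rfl⟩
    exact ⟨z, hz, by rwa [add_sub_cancel]⟩
  · rintro ⟨z, hz, hza⟩
    exact ⟨z + a, hza, z, hz, add_sub_cancel_left z a⟩

lemma ncard_sub_singleton (A : Set G) (y : G) : (A - {y}).ncard = A.ncard := by
  rw [Set.sub_singleton, Set.ncard_image_of_injective _ (sub_left_injective)]

lemma ncard_inter_add_singleton (A S : Set G) (d : G) :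
    (A ∩ (S + {d})).ncard = (S ∩ (A - {d})).ncard := by
  have himage : A ∩ (S + {d}) = (· + d) '' (S ∩ (A - {d})) := by
    ext w
    simp [← sub_eq_add_neg, and_comm]
  rw [himage, Set.ncard_image_of_injective _ (add_left_injective d)]

lemma ncard_mul_card_le_ncard_sub_add [Finite G] (A : Set G) (Y : Finset G) :
    A.ncard * #Y ≤ (A - (Y : Set G)).ncard
      + ∑ y ∈ Y.offDiag, ((A - {y.1}) ∩ (A - {y.2})).ncard := by
  have hunion : ⋃ y ∈ Y, (A - {y}) = A - (Y : Set G) := by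
    simp_rw [Set.sub_singleton]
    exact Set.iUnion_sub_right_image
  have hbonferroni := sum_ncard_le_ncard_biUnion_add_sum_offDiag Y fun y ↦ A - {y}
  simp only [ncard_sub_singleton, Finset.sum_const, smul_eq_mul, hunion] at hbonferroni
  rwa [mul_comm]

/-- The set of possible endpoints of an `n`-step walk from `b` in the sum graph of `A`, in which
`u` and `v` are adjacent when `u + v ∈ A`, whose odd-numbered vertices are also adjacent to `c`
and whose even-numbered vertices other than `b` are also adjacent to `x`. -/
def zigzag (A : Set G) (b c x : G) : ℕ → Set G
  | 0 => {b}
  | n + 1 => (A - zigzag A b c x n) ∩ (A - {if Even n then c else x})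

/-- The vertices `a` and `b` have a common neighbour `x` in the sum graph of `A` such that a
neighbour of `a` can be reached from `b` by a `K`-step walk as in `zigzag`. -/
def ZigzagLinked (A : Set G) (K : ℕ) (a b c : G) : Prop :=
  ∃ x ∈ (A - {b}) ∩ (A - {a}), a ∈ A - zigzag A b c x K

lemma zigzag_mono {A B : Set G} (hAB : A ⊆ B) (b c x : G) (n : ℕ) :
    zigzag A b c x n ⊆ zigzag B b c x n := by
  induction n with
  | zero => rfl
  | succ n ih => unfold zigzag; gcongr

lemma isUpperSet_zigzagLinked (K : ℕ) (a b c : G) :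
    IsUpperSet {A | ZigzagLinked A K a b c} := by
  rintro A B hAB ⟨x, hx, ha⟩
  exact ⟨x, Set.inter_subset_inter (Set.sub_subset_sub_right hAB) (Set.sub_subset_sub_right hAB) hx,
    Set.sub_subset_sub hAB (zigzag_mono hAB b c x K) ha⟩

variable [Finite G]

lemma integral_ncard_sub_singleton_inter (q : I) {y z : G} (hyz : y ≠ z) :
    ∫ A, (((A - {y}) ∩ (A - {z})).ncard : ℝ) ∂setBer((Set.univ : Set G), q)
      = Nat.card G * (q : ℝ) ^ 2 := by
  have := Fintype.ofFinite G
  have hpair (w : G) :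
      setBer(Set.univ, q).real {A : Set G | w ∈ (A - {y}) ∩ (A - {z})} = q ^ 2 := by
    simp_rw [Set.mem_inter_iff, mem_sub_singleton]
    exact setBernoulli_univ_real_mem_and_mem q ((add_right_injective w).ne hyz)
  rw [integral_ncard fun _ ↦ .of_discrete]
  simp_rw [hpair]
  simp

lemma integral_sum_offDiag_ncard_le (q : I) (Y : Finset G) :
    ∫ A, ∑ y ∈ Y.offDiag, (((A - {y.1}) ∩ (A - {y.2})).ncard : ℝ) ∂setBer((Set.univ : Set G), q)
      ≤ Nat.card G * (q * #Y : ℝ) ^ 2 := by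
  classical
  rw [integral_finsetSum _ fun _ _ ↦ .of_finite, Finset.sum_congr rfl fun y hy ↦
    integral_ncard_sub_singleton_inter q (Finset.mem_offDiag.1 hy).2.2]
  have hpairs : (#Y.offDiag : ℝ) ≤ #Y * #Y := by
    rw [Finset.offDiag_card]
    exact_mod_cast Nat.sub_le _ _
  calc ∑ y ∈ Y.offDiag, Nat.card G * (q : ℝ) ^ 2
      ≤ (#Y * #Y) * (Nat.card G * (q : ℝ) ^ 2) := by
        rw [Finset.sum_const, nsmul_eq_mul]
        gcongr
    _ = Nat.card G * (q * #Y : ℝ) ^ 2 := by ring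

lemma setBernoulli_univ_real_ncard_sub_lt_le (q : I) (Y : Set G) :
    setBer((Set.univ : Set G), q).real {A | ((A - Y).ncard : ℝ) < Nat.card G * q * Y.ncard / 4}
      ≤ 4 / (q * Nat.card G) + 4 * q * Y.ncard := by
  classical
  have hq := q.2.1
  lift Y to Finset G using Y.toFinite
  rw [Set.ncard_coe_finset]
  set μ := setBer((Set.univ : Set G), q)
  set t : ℝ := Nat.card G * q * #Y / 4
  let overlap (A : Set G) : ℝ := ∑ y ∈ Y.offDiag, (((A - {y.1}) ∩ (A - {y.2})).ncard : ℝ)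
  rcases (by positivity : 0 ≤ t).eq_or_lt' with ht | ht
  · simp only [ht, (Nat.cast_nonneg _).not_gt, Set.ofPred_false, measureReal_empty]
    positivity
  have hoverlap : μ.real {A | t ≤ overlap A} ≤ 4 * q * #Y := by
    refine le_of_mul_le_mul_left ?_ ht
    calc t * μ.real {A | t ≤ overlap A} ≤ ∫ A, overlap A ∂μ :=
          mul_meas_ge_le_integral_of_nonneg
            (.of_forall fun A ↦ Finset.sum_nonneg fun _ _ ↦ Nat.cast_nonneg _) .of_finite t
      _ ≤ Nat.card G * (q * #Y : ℝ) ^ 2 := integral_sum_offDiag_ncard_le q Y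
      _ = t * (4 * q * #Y) := by ring
  have hsize : μ.real {A | (A.ncard : ℝ) < q * Nat.card G / 2} ≤ 4 / (q * Nat.card G) := by
    simpa [Set.ncard_univ] using setBernoulli_univ_real_ncard_inter_lt_le q (Set.univ : Set G)
  refine (measureReal_mono fun A hA ↦ ?_).trans
    ((measureReal_union_le _ _).trans (add_le_add hsize hoverlap))
  by_contra hA'
  simp only [Set.mem_union, Set.mem_ofPred_eq, not_or, not_lt, not_le] at hA hA'
  have hbonferroni : (A.ncard * #Y : ℝ) ≤ (A - (Y : Set G)).ncard + overlap A := by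
    dsimp only [overlap]
    exact_mod_cast ncard_mul_card_le_ncard_sub_add A Y
  have hcard : (q * Nat.card G / 2 * #Y : ℝ) ≤ A.ncard * #Y := by gcongr; exact hA'.1
  linarith [hA'.2, show (q * Nat.card G / 2 * #Y : ℝ) = 2 * t by ring]

lemma setBernoulli_univ_real_ncard_inter_sub_singleton_lt_le (q : I) (S : Set G) (d : G) :
    setBer((Set.univ : Set G), q).real {A | ((S ∩ (A - {d})).ncard : ℝ) < q * S.ncard / 2}
      ≤ 4 / (q * S.ncard) := by
  have hcard : (S + {d}).ncard = S.ncard := by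
    rw [Set.add_singleton, Set.ncard_image_of_injective _ (add_left_injective d)]
  have hinter := setBernoulli_univ_real_ncard_inter_lt_le q (S + {d})
  simp_rw [ncard_inter_add_singleton, hcard] at hinter
  exact hinter

lemma sprinkling_two_real_ncard_sub_inter_lt_le (q : I) (Y : Set G) (d : G) :
    (sprinkling G q 2).real
        {A | (((A - Y) ∩ (A - {d})).ncard : ℝ) < Nat.card G * (q : ℝ) ^ 2 * Y.ncard / 8}
      ≤ 4 / (q * Nat.card G) + 4 * q * Y.ncard + 16 / (Nat.card G * (q : ℝ) ^ 2 * Y.ncard) := by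
  have hq := q.2.1
  set t : ℝ := Nat.card G * (q : ℝ) ^ 2 * Y.ncard with ht
  rcases (by positivity : 0 ≤ t).eq_or_lt' with h0 | hpos
  · simp only [h0, zero_div, (Nat.cast_nonneg _).not_gt, Set.ofPred_false, measureReal_empty]
    positivity
  refine (sprinkling_add_real_le q 1 1 (δ := 16 / t)
    (G := {A | Nat.card G * (q : ℝ) * Y.ncard / 4 ≤ (A - Y).ncard}) (by positivity)
    fun A hA ↦ ?_).trans (add_le_add_left ?_ _)
  · rw [Set.mem_ofPred_eq] at hA
    have htA : t / 4 ≤ q * (A - Y).ncard := by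
      rw [ht]
      linear_combination (q : ℝ) * hA
    calc (sprinkling G q 1).real
          {X | (((A ∪ X - Y) ∩ (A ∪ X - {d})).ncard : ℝ) < t / 8}
        ≤ (sprinkling G q 1).real
          {X | (((A - Y) ∩ (X - {d})).ncard : ℝ) < q * (A - Y).ncard / 2} := by
          refine measureReal_mono fun X hX ↦ ?_
          rw [Set.mem_ofPred_eq] at hX ⊢
          refine (Nat.cast_le.2 (Set.ncard_le_ncard ?_)).trans_lt (hX.trans_le (by linarith))
          gcongr
          exacts [Set.subset_union_left, Set.subset_union_right]
      _ ≤ 4 / (q * (A - Y).ncard) := by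
          rw [sprinkling_one]
          exact setBernoulli_univ_real_ncard_inter_sub_singleton_lt_le q (A - Y) d
      _ ≤ 4 / (t / 4) := by gcongr
      _ = 16 / t := by field_simp; norm_num
  · rw [sprinkling_one]
    simpa only [Set.compl_ofPred, not_le] using setBernoulli_univ_real_ncard_sub_lt_le q Y

variable {q : I} {M : ℝ} {K : ℕ}

lemma sprinkling_two_real_ncard_sub_inter_lt_le_div (hM : 8 ≤ M)
    (hNq : Nat.card G * (q : ℝ) ^ 2 = M ^ 4) {Y : Set G} (hY : Y.Nonempty)
    (hqY : (q : ℝ) * Y.ncard ≤ 2 / M) (d : G) :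
    (sprinkling G q 2).real {A | (((A - Y) ∩ (A - {d})).ncard : ℝ) < M ^ 3 * Y.ncard}
      ≤ 28 / M := by
  have hY1 : (1 : ℝ) ≤ Y.ncard := mod_cast hY.ncard_pos
  have hM4 : M ≤ M ^ 4 := le_self_pow₀ (by linarith) (by norm_num)
  have hqN : M ≤ q * Nat.card G := by
    have : (q : ℝ) * (q * Nat.card G) ≤ 1 * (q * Nat.card G) := by
      have := q.2.1
      gcongr
      exact q.2.2
    linarith
  calc _ ≤ (sprinkling G q 2).real
        {A | (((A - Y) ∩ (A - {d})).ncard : ℝ) < Nat.card G * (q : ℝ) ^ 2 * Y.ncard / 8} := by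
        refine measureReal_mono fun A hA ↦ ?_
        rw [Set.mem_ofPred_eq] at hA ⊢
        have : 8 * (M ^ 3 * Y.ncard) ≤ M * (M ^ 3 * Y.ncard) := by gcongr
        rw [hNq]
        linarith
    _ ≤ 4 / (q * Nat.card G) + 4 * (q * Y.ncard) + 16 / (M ^ 4 * Y.ncard) := by
        rw [← hNq, ← mul_assoc 4]
        exact sprinkling_two_real_ncard_sub_inter_lt_le q Y d
    _ ≤ 4 / M + 4 * (2 / M) + 16 / (M * 1) := by gcongr
    _ = 28 / M := by ring

lemma mul_pow_le_one_div (hM : 8 ≤ M) (hq : (q : ℝ) * M ^ (3 * K) = M ^ 2) {j : ℕ} (hj : j < K) :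
    (q : ℝ) * M ^ (3 * j) ≤ 1 / M := by
  have hM0 : 0 < M := by linarith
  rw [le_div_iff₀ hM0]
  refine le_of_mul_le_mul_right ?_ (pow_pos hM0 2)
  calc (q : ℝ) * M ^ (3 * j) * M * M ^ 2 = q * M ^ (3 * j + 3) := by ring
    _ ≤ (q : ℝ) * M ^ (3 * K) := by
        have := q.2.1
        gcongr
        · linarith
        · lia
    _ = 1 * M ^ 2 := by rw [hq, one_mul]

lemma sprinkling_real_ncard_zigzag_lt_le (hM : 8 ≤ M) (hNq : Nat.card G * (q : ℝ) ^ 2 = M ^ 4)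
    (hq : (q : ℝ) * M ^ (3 * K) = M ^ 2) (b c x : G) {j : ℕ} (hj : j ≤ K) :
    (sprinkling G q (j * 2)).real {A | ((zigzag A b c x j).ncard : ℝ) < M ^ (3 * j)}
      ≤ 28 * j / M := by
  induction j with
  | zero => simp [zigzag]
  | succ j ih =>
    rw [add_one_mul]
    refine (sprinkling_add_real_le q (j * 2) 2 (δ := 28 / M)
      (G := {A | M ^ (3 * j) ≤ (zigzag A b c x j).ncard}) (by positivity)
      fun A hA ↦ ?_).trans ?_
    · have hMj : 1 ≤ M ^ (3 * j) := one_le_pow₀ (by linarith)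
      obtain ⟨Y, hYA, hY_ge, hY_le⟩ := exists_subset_ncard_le_two_mul hMj hA
      have hqY : (q : ℝ) * Y.ncard ≤ 2 / M :=
        calc (q : ℝ) * Y.ncard ≤ q * (2 * M ^ (3 * j)) := by
              have := q.2.1
              gcongr
          _ = 2 * ((q : ℝ) * M ^ (3 * j)) := by ring
          _ ≤ 2 * (1 / M) := by gcongr; exact mul_pow_le_one_div hM hq hj
          _ = 2 / M := by ring
      have hY_pos : (0 : ℝ) < Y.ncard := by linarith
      have hY0 : Y.Nonempty := Set.nonempty_of_ncard_ne_zero (Nat.cast_ne_zero.1 hY_pos.ne')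
      refine (measureReal_mono fun X hX ↦ ?_).trans
        (sprinkling_two_real_ncard_sub_inter_lt_le_div hM hNq hY0 hqY (if Even j then c else x))
      rw [Set.mem_ofPred_eq] at hX ⊢
      have hsub : (X - Y) ∩ (X - {if Even j then c else x}) ⊆ zigzag (A ∪ X) b c x (j + 1) := by
        unfold zigzag
        gcongr
        exacts [Set.subset_union_right, hYA.trans (zigzag_mono Set.subset_union_left b c x j),
          Set.subset_union_right]
      calc (((X - Y) ∩ (X - {if Even j then c else x})).ncard : ℝ)
          ≤ (zigzag (A ∪ X) b c x (j + 1)).ncard := mod_cast Set.ncard_le_ncard hsub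
        _ < M ^ (3 * (j + 1)) := hX
        _ = M ^ 3 * M ^ (3 * j) := by ring
        _ ≤ M ^ 3 * Y.ncard := by gcongr
    · simp only [Set.compl_ofPred, not_le]
      push_cast
      linear_combination ih (by lia)

lemma setBernoulli_univ_real_notMem_sub_le (hM : 8 ≤ M)
    (hq : (q : ℝ) * M ^ (3 * K) = M ^ 2) {Z : Set G} (hZ : M ^ (3 * K) ≤ Z.ncard) (a : G) :
    setBer((Set.univ : Set G), q).real {A | a ∉ A - Z} ≤ 4 / M := by
  have hqZ : M ≤ q * Z.ncard :=
    calc M ≤ M ^ 2 := le_self_pow₀ (by linarith) (by norm_num)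
      _ = q * M ^ (3 * K) := hq.symm
      _ ≤ q * Z.ncard := by
        have := q.2.1
        gcongr
  calc setBer((Set.univ : Set G), q).real {A | a ∉ A - Z}
      ≤ setBer((Set.univ : Set G), q).real {A | ((Z ∩ (A - {a})).ncard : ℝ) < q * Z.ncard / 2} := by
        refine measureReal_mono fun A hA ↦ ?_
        have hempty : Z ∩ (A - {a}) = ∅ := Set.eq_empty_of_forall_notMem fun z hz ↦
          hA (mem_sub_iff_exists_mem_sub_singleton.2 ⟨z, hz⟩)
        rw [Set.mem_ofPred_eq, hempty, Set.ncard_empty, Nat.cast_zero]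
        linarith
    _ ≤ 4 / (q * Z.ncard) := setBernoulli_univ_real_ncard_inter_sub_singleton_lt_le q Z a
    _ ≤ 4 / M := by gcongr

lemma sprinkling_real_notMem_sub_zigzag_le (hM : 8 ≤ M)
    (hNq : Nat.card G * (q : ℝ) ^ 2 = M ^ 4) (hq : (q : ℝ) * M ^ (3 * K) = M ^ 2) (a b c x : G) :
    (sprinkling G q (K * 2 + 1)).real {A | a ∉ A - zigzag A b c x K} ≤ 28 * K / M + 4 / M := by
  refine (sprinkling_add_real_le q (K * 2) 1 (δ := 4 / M)
    (G := {A | M ^ (3 * K) ≤ (zigzag A b c x K).ncard}) (by positivity) fun A hA ↦ ?_).trans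
    (add_le_add_left ?_ _)
  · rw [sprinkling_one]
    refine (measureReal_mono ?_).trans (setBernoulli_univ_real_notMem_sub_le hM hq hA a)
    exact fun X ↦ mt fun h ↦ Set.sub_subset_sub Set.subset_union_right
      (zigzag_mono Set.subset_union_left b c x K) h
  · simpa only [Set.compl_ofPred, not_le] using
      sprinkling_real_ncard_zigzag_lt_le hM hNq hq b c x le_rfl

lemma sprinkling_real_not_zigzagLinked_le (hM : 8 ≤ M) (hK : 0 < K)
    (hNq : Nat.card G * (q : ℝ) ^ 2 = M ^ 4) (hq : (q : ℝ) * M ^ (3 * K) = M ^ 2) (a b c : G) :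
    (sprinkling G q (2 * K + 3)).real {A | ZigzagLinked A K a b c}ᶜ ≤ (28 * K + 32) / M := by
  have hqb : (q : ℝ) * ({b} : Set G).ncard ≤ 2 / M := by
    rw [Set.ncard_singleton, Nat.cast_one]
    calc (q : ℝ) * 1 = q * M ^ (3 * 0) := by simp
      _ ≤ 1 / M := mul_pow_le_one_div hM hq hK
      _ ≤ 2 / M := by gcongr; norm_num
  have hlink := sprinkling_add_real_le q 2 (K * 2 + 1) (B := {A | ZigzagLinked A K a b c}ᶜ)
    (G := {A | M ^ 3 * ({b} : Set G).ncard ≤ ((A - {b}) ∩ (A - {a})).ncard})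
    (δ := 28 * K / M + 4 / M) (by positivity) fun A hA ↦ ?_
  · have hcommon : (sprinkling G q 2).real _ ≤ 28 / M :=
      sprinkling_two_real_ncard_sub_inter_lt_le_div hM hNq (Set.singleton_nonempty b) hqb a
    simp only [Set.compl_ofPred, not_le] at hlink ⊢
    rw [show 2 * K + 3 = 2 + (K * 2 + 1) by ring]
    linear_combination hlink + hcommon
  · rw [Set.mem_ofPred_eq, Set.ncard_singleton, Nat.cast_one, mul_one] at hA
    have hpos : (0 : ℝ) < ((A - {b}) ∩ (A - {a})).ncard := lt_of_lt_of_le (by positivity) hA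
    obtain ⟨x, hx⟩ := Set.nonempty_of_ncard_ne_zero (Nat.cast_ne_zero.1 hpos.ne')
    refine (measureReal_mono fun X ↦ mt fun (ha : a ∈ X - zigzag X b c x K) ↦ ⟨x, ?_, ?_⟩).trans
      (sprinkling_real_notMem_sub_zigzag_le hM hNq hq a b c x)
    · have hAX : A ⊆ A ∪ X := Set.subset_union_left
      exact Set.inter_subset_inter (Set.sub_subset_sub_right hAX) (Set.sub_subset_sub_right hAX) hx
    · have hXA : X ⊆ A ∪ X := Set.subset_union_right
      exact Set.sub_subset_sub hXA (zigzag_mono hXA b c x K) ha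

lemma setBernoulli_univ_real_not_zigzagLinked_le {p : I} (hM : 8 ≤ M) (hK : 0 < K)
    (hNq : Nat.card G * (q : ℝ) ^ 2 = M ^ 4) (hq : (q : ℝ) * M ^ (3 * K) = M ^ 2) {m : ℕ}
    (hp : (m * (2 * K + 3) : ℕ) * (q : ℝ) ≤ p) (a b c : G) :
    setBer((Set.univ : Set G), p).real {A | ZigzagLinked A K a b c}ᶜ
      ≤ ((28 * K + 32) / M) ^ m := by
  have hupper := isUpperSet_zigzagLinked K a b c
  refine (setBernoulli_univ_real_compl_le_sprinkling hp hupper).trans <|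
    (sprinkling_mul_real_compl_le_pow q _ _ hupper).trans ?_
  gcongr
  exact sprinkling_real_not_zigzagLinked_le hM hK hNq hq a b c

lemma setBernoulli_univ_real_not_forall_zigzagLinked_le {p : I} (hM : 8 ≤ M) (hK : 0 < K)
    (hN : Nat.card G = M ^ (6 * K)) (hq : (q : ℝ) * M ^ (3 * K) = M ^ 2)
    (hp : ((18 * K + 1) * (2 * K + 3) : ℕ) * (q : ℝ) ≤ p) :
    setBer((Set.univ : Set G), p).real {A | ∀ a b c, ZigzagLinked A K a b c}ᶜ
      ≤ (28 * K + 32) ^ (18 * K + 1) / M := by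
  have := Fintype.ofFinite G
  have hNq : Nat.card G * (q : ℝ) ^ 2 = M ^ 4 := by
    rw [hN]
    linear_combination (q * M ^ (3 * K) + M ^ 2) * hq
  calc setBer((Set.univ : Set G), p).real {A | ∀ a b c, ZigzagLinked A K a b c}ᶜ
      ≤ setBer((Set.univ : Set G), p).real
          (⋃ v : G × G × G, {A | ZigzagLinked A K v.1 v.2.1 v.2.2}ᶜ) := by
        refine measureReal_mono fun A hA ↦ ?_
        simpa [Prod.exists] using hA
    _ ≤ ∑ v : G × G × G,
          setBer((Set.univ : Set G), p).real {A | ZigzagLinked A K v.1 v.2.1 v.2.2}ᶜ :=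
        measureReal_iUnion_fintype_le _
    _ ≤ ∑ _v : G × G × G, ((28 * K + 32) / M) ^ (18 * K + 1) :=
        Finset.sum_le_sum fun v _ ↦
          setBernoulli_univ_real_not_zigzagLinked_le hM hK hNq hq hp v.1 v.2.1 v.2.2
    _ = Nat.card G ^ 3 * ((28 * K + 32) / M) ^ (18 * K + 1) := by
        rw [Finset.sum_const, Finset.card_univ, Fintype.card_prod, Fintype.card_prod, nsmul_eq_mul,
          ← Nat.card_eq_fintype_card]
        push_cast
        ring
    _ = (28 * K + 32) ^ (18 * K + 1) / M := by
        rw [hN, div_pow, ← pow_mul, pow_succ M, show 6 * K * 3 = 18 * K by ring]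
        field_simp

end Growth

/-! ### Positivity of the iterated counts -/

section IterLam

variable {G : Type*} [AddCommGroup G] {t : G → ℝ}

/-- The counting polynomials `Λ^i_{a,b,c}[t]` of `Lam`, over an arbitrary abelian group. -/
noncomputable def iterLam (t : G → ℝ) : ℕ → G → G → G → ℝ
  | 0, a, b, c => ∑ᶠ x, t (x + a) * t (x + b) * t (x + c)
  | i + 1, a, b, c => ∑ᶠ z, iterLam t i a b z * iterLam t i a z c * iterLam t i z b c

lemma iterLam_nonneg (ht : 0 ≤ t) (i : ℕ) (a b c : G) : 0 ≤ iterLam t i a b c := by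
  induction i generalizing a b c with
  | zero => exact finsum_nonneg fun x ↦ mul_nonneg (mul_nonneg (ht _) (ht _)) (ht _)
  | succ i ih => exact finsum_nonneg fun z ↦ mul_nonneg (mul_nonneg (ih ..) (ih ..)) (ih ..)

variable [Finite G]

lemma iterLam_zero_pos (ht : 0 ≤ t) {a b c : G} (x : G) (ha : 0 < t (x + a)) (hb : 0 < t (x + b))
    (hc : 0 < t (x + c)) : 0 < iterLam t 0 a b c :=
  finsum_pos (fun _ ↦ mul_nonneg (mul_nonneg (ht _) (ht _)) (ht _))
    ⟨x, mul_pos (mul_pos ha hb) hc⟩ (Set.toFinite _)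

lemma iterLam_succ_pos (ht : 0 ≤ t) {i : ℕ} {a b c : G} (z : G) (hc : 0 < iterLam t i a b z)
    (hb : 0 < iterLam t i a z c) (ha : 0 < iterLam t i z b c) : 0 < iterLam t (i + 1) a b c :=
  finsum_pos (fun _ ↦ mul_nonneg (mul_nonneg (iterLam_nonneg ht ..) (iterLam_nonneg ht ..))
    (iterLam_nonneg ht ..)) ⟨z, mul_pos (mul_pos hc hb) ha⟩ (Set.toFinite _)

lemma iterLam_pos_of_common_neighbor (ht : 0 ≤ t) (x : G) (i : ℕ) {a b c : G}
    (ha : 0 < t (x + a)) (hb : 0 < t (x + b)) (hc : 0 < t (x + c)) : 0 < iterLam t i a b c := by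
  induction i generalizing a b c with
  | zero => exact iterLam_zero_pos ht x ha hb hc
  | succ i ih => exact iterLam_succ_pos ht a (ih ha hb ha) (ih ha ha hc) (ih ha hb hc)

variable {A : Set G}

/- Let `v` be the last vertex of the walk and `z` the one before it. Then `a, b, z` are all adjacent
to `x` and `a, z, c` to `v`, while the shorter walk ending at the predecessor of `z` handles
`z, b, c`. -/
lemma iterLam_pos_of_mem_sub_zigzag (ht : 0 ≤ t) (hA : ∀ y ∈ A, 0 < t y) {b c x : G}
    (hb : x ∈ A - {b}) {i : ℕ} {a : G} (ha : x ∈ A - {a})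
    (hlink : a ∈ A - zigzag A b c x (2 * i + 1)) : 0 < iterLam t i a b c := by
  have hpos {u v : G} (h : u ∈ A - {v}) : 0 < t (u + v) := hA _ (mem_sub_singleton.1 h)
  have hsymm {u v : G} (h : u ∈ A - {v}) : v ∈ A - {u} := by
    rwa [mem_sub_singleton, add_comm, ← mem_sub_singleton]
  induction i generalizing a with
  | zero =>
    obtain ⟨v, ⟨hvb, hvc⟩, hva⟩ := mem_sub_iff_exists_mem_sub_singleton.1 hlink
    rw [if_pos (by simp)] at hvc
    exact iterLam_zero_pos ht v (hpos hva) (hpos hvb) (hpos hvc)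
  | succ i ih =>
    obtain ⟨v, ⟨hvz, hvc⟩, hva⟩ := mem_sub_iff_exists_mem_sub_singleton.1 hlink
    obtain ⟨z, ⟨hz, hzx⟩, hzv⟩ := mem_sub_iff_exists_mem_sub_singleton.1 hvz
    rw [if_pos (by simp)] at hvc
    rw [if_neg (by simp)] at hzx
    exact iterLam_succ_pos ht z
      (iterLam_pos_of_common_neighbor ht x i (hpos ha) (hpos hb) (hpos (hsymm hzx)))
      (iterLam_pos_of_common_neighbor ht v i (hpos hva) (hpos (hsymm hzv)) (hpos hvc))
      (ih (hsymm hzx) hz)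

lemma iterLam_pos_of_zigzagLinked (ht : 0 ≤ t) (hA : ∀ y ∈ A, 0 < t y) {i : ℕ} {a b c : G}
    (h : ZigzagLinked A (2 * i + 1) a b c) : 0 < iterLam t i a b c :=
  let ⟨_, ⟨hb, ha⟩, hlink⟩ := h
  iterLam_pos_of_mem_sub_zigzag ht hA hb ha hlink

end IterLam

/-! ### Asymptotics -/

section Asymptotics

variable {ε : ℝ} {K : ℕ}

lemma setBernoulli_univ_real_not_forall_zigzagLinked_le_of_rpow_le {G : Type*} [AddCommGroup G]
    [Finite G] {M : ℝ} {p : I} (hK : 0 < K) (hε : 1 ≤ 2 * K * ε) (hN : Nat.card G = M ^ (6 * K))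
    (hM : ((18 * K + 1) * (2 * K + 3) : ℕ) ≤ M) (hp : (Nat.card G : ℝ) ^ (-(1 : ℝ) / 2 + ε) ≤ p) :
    setBer((Set.univ : Set G), p).real {A | ∀ a b c, ZigzagLinked A K a b c}ᶜ
      ≤ (28 * K + 32) ^ (18 * K + 1) / M := by
  have hM8 : 8 ≤ M := (Nat.cast_le.2 (by nlinarith : 8 ≤ (18 * K + 1) * (2 * K + 3))).trans hM
  have hM0 : 0 < M := by linarith
  obtain ⟨q, hq⟩ : ∃ q : I, (q : ℝ) * M ^ (3 * K) = M ^ 2 := by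
    have hle : M ^ 2 ≤ M ^ (3 * K) := pow_le_pow_right₀ (by linarith) (by lia)
    exact ⟨⟨M ^ 2 / M ^ (3 * K), by positivity, div_le_one_of_le₀ hle (by positivity)⟩,
      div_mul_cancel₀ _ (by positivity)⟩
  refine setBernoulli_univ_real_not_forall_zigzagLinked_le hM8 hK hN hq (le_trans ?_ hp)
  have hMq : M * q = M ^ (3 - 3 * K : ℝ) := by
    rw [Real.rpow_sub hM0, eq_div_iff (by positivity), mul_assoc]
    have hpow : M ^ (3 * K : ℝ) = M ^ (3 * K) := mod_cast Real.rpow_natCast M (3 * K)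
    rw [hpow, hq]
    norm_cast
    ring
  calc ((18 * K + 1) * (2 * K + 3) : ℕ) * (q : ℝ) ≤ M * q := by
        have := q.2.1
        gcongr
    _ = M ^ (3 - 3 * K : ℝ) := hMq
    _ ≤ M ^ ((6 * K : ℕ) * (-(1 : ℝ) / 2 + ε)) := by
        refine Real.rpow_le_rpow_of_exponent_le (by linarith) ?_
        push_cast
        linarith
    _ = (Nat.card G : ℝ) ^ (-(1 : ℝ) / 2 + ε) := by
        rw [hN, Real.rpow_mul hM0.le, Real.rpow_natCast]

variable {ι : Type*} {l : Filter ι}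

lemma tendsto_measure_one_of_real_compl_le {Ω : ι → Type*} [∀ n, MeasurableSpace (Ω n)]
    {μ : ∀ n, Measure (Ω n)} [∀ n, IsProbabilityMeasure (μ n)] {S : ∀ n, Set (Ω n)} {f : ι → ℝ}
    (hS : ∀ᶠ n in l, MeasurableSet (S n)) (hf : Tendsto f l (nhds 0))
    (h : ∀ᶠ n in l, (μ n).real (S n)ᶜ ≤ f n) : Tendsto (fun n ↦ μ n (S n)) l (nhds 1) := by
  refine (ENNReal.tendsto_toReal_iff (by finiteness) ENNReal.one_ne_top).1 ?_
  refine tendsto_of_tendsto_of_tendsto_of_le_of_le' (g := fun n ↦ 1 - f n)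
    (by simpa using hf.const_sub 1) tendsto_const_nhds ?_ (.of_forall fun n ↦ measureReal_le_one)
  filter_upwards [hS, h] with n hSn hn
  rw [probReal_compl_eq_one_sub hSn] at hn
  exact sub_le_comm.1 hn

lemma tendsto_measure_one_mono {Ω : ι → Type*} [∀ n, MeasurableSpace (Ω n)]
    {μ : ∀ n, Measure (Ω n)} [∀ n, IsProbabilityMeasure (μ n)] {S T : ∀ n, Set (Ω n)}
    (hS : Tendsto (fun n ↦ μ n (S n)) l (nhds 1)) (hST : ∀ᶠ n in l, S n ⊆ T n) :
    Tendsto (fun n ↦ μ n (T n)) l (nhds 1) :=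
  tendsto_of_tendsto_of_tendsto_of_le_of_le' hS tendsto_const_nhds
    (hST.mono fun _ ↦ measure_mono) (.of_forall fun _ ↦ prob_le_one)

theorem tendsto_setBernoulli_forall_zigzagLinked (hK : 0 < K) (hε : 1 ≤ 2 * K * ε)
    {G : ι → Type*} [∀ n, AddCommGroup (G n)] {p : ι → I}
    (hG : Tendsto (fun n ↦ Nat.card (G n)) l atTop)
    (hp : ∀ᶠ n in l, (Nat.card (G n) : ℝ) ^ (-(1 : ℝ) / 2 + ε) ≤ p n) :
    Tendsto (fun n ↦ setBer((Set.univ : Set (G n)), p n) {A | ∀ a b c, ZigzagLinked A K a b c}) l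
      (nhds 1) := by
  let M (n : ι) : ℝ := (Nat.card (G n) : ℝ) ^ ((6 * K : ℕ) : ℝ)⁻¹
  have hM : Tendsto M l atTop :=
    (tendsto_rpow_atTop (by positivity)).comp (tendsto_natCast_atTop_atTop.comp hG)
  have hfin : ∀ᶠ n in l, Finite (G n) := by
    filter_upwards [hG.eventually_ne_atTop 0] with n hn
    exact Nat.finite_of_card_ne_zero hn
  refine tendsto_measure_one_of_real_compl_le (hfin.mono fun n _ ↦ .of_discrete)
    (hM.const_div_atTop ((28 * K + 32 : ℝ) ^ (18 * K + 1))) ?_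
  filter_upwards [hfin, hp, hM.eventually_ge_atTop ((18 * K + 1) * (2 * K + 3) : ℕ)]
    with n _ hpn hMn
  exact setBernoulli_univ_real_not_forall_zigzagLinked_le_of_rpow_le hK hε
    (Real.rpow_inv_natCast_pow (Nat.cast_nonneg _) (by positivity)).symm hMn hpn

end Asymptotics

lemma Lam_eq_iterLam (N i : ℕ) (a b c : ZMod N) (t : ZMod N → ℝ) :
    Lam N i a b c t = iterLam t i a b c := by
  induction i generalizing a b c with
  | zero => rfl
  | succ i ih => simp only [Lam, iterLam, ih]

lemma coe_toNNReal_le_one (p : I) : ((p : ℝ).toNNReal : ENNReal) ≤ 1 :=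
  ENNReal.ofReal_le_one.2 p.2.2

instance (p : I) : IsProbabilityMeasure (bernoulliBool (p : ℝ).toNNReal) where
  measure_univ := by
    simpa [bernoulliBool] using add_tsub_cancel_of_le (coe_toNNReal_le_one p)

lemma map_bernoulliBool (p : I) :
    (bernoulliBool (p : ℝ).toNNReal).map (· = true) = Ber(True, False, p) := by
  have := Measure.isProbabilityMeasure_map (μ := bernoulliBool (p : ℝ).toNNReal)
    (f := (· = true)) (by fun_prop)
  refine eq_bernoulliMeasure_of_real_false ?_
  have hfalse : (· = true) ⁻¹' {False} = {false} := by ext; simp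
  rw [map_measureReal_apply .of_discrete .of_discrete, hfalse, coe_symm_eq]
  simp [bernoulliBool, measureReal_def, ENNReal.toReal_sub_of_le (coe_toNNReal_le_one p), p.2.1]

lemma map_randomSubsetMeasure (N : ℕ) [NeZero N] (p : I) :
    (randomSubsetMeasure N (p : ℝ).toNNReal).map (fun ω ↦ {x | ω x = true})
      = setBer(Set.univ, p) := by
  rw [setBernoulli_univ_eq_map_infinitePi, Measure.infinitePi_eq_pi, ← map_bernoulliBool,
    ← Measure.pi_map_pi (f := fun _ (b : Bool) ↦ b = true) (by fun_prop),
    Measure.map_map (by fun_prop) (by fun_prop), randomSubsetMeasure, dif_neg (NeZero.ne N)]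
  rfl

lemma randomSubsetMeasure_setOf_mem (N : ℕ) [NeZero N] (p : I) (Q : Set (Set (ZMod N))) :
    randomSubsetMeasure N (p : ℝ).toNNReal {ω | {x | ω x = true} ∈ Q} = setBer(Set.univ, p) Q := by
  rw [← map_randomSubsetMeasure, Measure.map_apply .of_discrete .of_discrete]
  rfl

lemma tendsto_randomSubsetMeasure_Lam_pos {i : ℕ} {p : ℕ → I}
    (h : Tendsto (fun N ↦ setBer((Set.univ : Set (ZMod N)), p N)
      {A | ∀ a b c, 0 < iterLam (A.indicator 1) i a b c}) atTop (nhds 1)) :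
    Tendsto
      (fun N ↦ randomSubsetMeasure N (p N : ℝ).toNNReal
        {ω | ∀ a b c, a ≠ b → a ≠ c → b ≠ c →
          0 < Lam N i a b c ({x | ω x = true}.indicator fun _ ↦ 1)})
      atTop (nhds 1) := by
  refine (tendsto_measure_one_mono
    (T := fun N ↦ {A | ∀ a b c, a ≠ b → a ≠ c → b ≠ c → 0 < Lam N i a b c (A.indicator 1)})
    h (.of_forall fun N A hA a b c _ _ _ ↦ ?_)).congr' ?_
  · rw [Lam_eq_iterLam]
    exact hA a b c
  · filter_upwards [eventually_ne_atTop 0] with N hN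
    have : NeZero N := ⟨hN⟩
    exact (randomSubsetMeasure_setOf_mem N (p N) _).symm

lemma natCast_rpow_le_one (n : ℕ) {x : ℝ} (hx : x ≤ 0) : (n : ℝ) ^ x ≤ 1 := by
  rcases n.eq_zero_or_pos with rfl | hn
  · simpa using Real.zero_rpow_le_one x
  · exact Real.rpow_le_one_of_one_le_of_nonpos (mod_cast hn) hx

theorem exists_iter_Lam_pos_whp_general (ε : ℝ) (hε0 : 0 < ε) :
    ∃ i : ℕ, ∀ {ι : Type*} (l : Filter ι) (G : ι → Type*) [∀ n, AddCommGroup (G n)] (p : ι → I),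
      Tendsto (fun n ↦ Nat.card (G n)) l atTop →
      (∀ᶠ n in l, (Nat.card (G n) : ℝ) ^ (-(1 : ℝ) / 2 + ε) ≤ p n) →
      Tendsto
        (fun n ↦ setBer((Set.univ : Set (G n)), p n)
          {A | ∀ a b c, 0 < iterLam (A.indicator 1) i a b c})
        l (nhds 1) := by
  obtain ⟨i, hi⟩ := exists_nat_ge ε⁻¹
  have hε : 1 ≤ 2 * (2 * i + 1 : ℕ) * ε := by
    have := (inv_le_iff_one_le_mul₀ hε0).1 hi
    push_cast
    nlinarith
  refine ⟨i, fun l G _ p hG hp ↦ tendsto_measure_one_mono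
    (tendsto_setBernoulli_forall_zigzagLinked (Nat.succ_pos (2 * i)) hε hG hp) ?_⟩
  filter_upwards [hG.eventually_ne_atTop 0] with n hn A hA a b c
  have := Nat.finite_of_card_ne_zero hn
  refine iterLam_pos_of_zigzagLinked (Set.indicator_nonneg fun _ _ ↦ zero_le_one) ?_ (hA a b c)
  exact fun y hy ↦ by simp [hy]

theorem exists_iter_Lam_pos_whp (ε : ℝ) (hε0 : 0 < ε) (hε : ε < 1/2) :
    ∃ i : ℕ,
      Tendsto
        (fun N : ℕ =>
          randomSubsetMeasure N (Real.toNNReal ((N : ℝ) ^ (-(1:ℝ)/2 + ε)))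
            {ω | ∀ a b c : ZMod N, a ≠ b → a ≠ c → b ≠ c →
              0 < Lam N i a b c (Set.indicator {x : ZMod N | ω x = true} fun _ => (1 : ℝ))})
        atTop (nhds 1) := by
  obtain ⟨i, hi⟩ := exists_iter_Lam_pos_whp_general ε hε0
  let p (N : ℕ) : I :=
    ⟨(N : ℝ) ^ (-(1 : ℝ) / 2 + ε), by positivity, natCast_rpow_le_one N (by linarith)⟩
  exact ⟨i, tendsto_randomSubsetMeasure_Lam_pos (p := p) <| hi atTop ZMod p
    (tendsto_id.congr fun N ↦ (Nat.card_zmod N).symm) (.of_forall fun N ↦ by rw [Nat.card_zmod])⟩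
end

section
/- There exists an absolute constant C > 0 such that for all sufficiently large N, all pairwise distinct a, b, c ∈ ZMod N, and every nonempty B ⊆ ZMod N with |B| ≤ 9, the quantity m(B) (the number of non-degenerate quadruples v ∈ (ZMod N)⁴ such that every element of B occurs among the nine coordinates of ψ(v)) satisfies: m(B) ≤ C·N^{4 - ⌈|B|/2⌉} if |B| ≤ 8, and m(B) ≤ C if |B| = 9. -/
open Filter

/-- The map `ψ(x₁,x₂,x₃,z) = (x₁+a, x₁+b, x₁+z, x₂+a, x₂+z, x₂+c, x₃+z, x₃+b, x₃+c)`. -/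
def psiBase {N : ℕ} (a b c : ZMod N) (v : ZMod N × ZMod N × ZMod N × ZMod N) :
    Fin 9 → ZMod N :=
  ![v.1 + a, v.1 + b, v.1 + v.2.2.2,
    v.2.1 + a, v.2.1 + v.2.2.2, v.2.1 + c,
    v.2.2.1 + v.2.2.2, v.2.2.1 + b, v.2.2.1 + c]

/-- The seven quantities `x₁, x₂, x₃, z, a, b, c`. -/
def val7 {N : ℕ} (a b c : ZMod N) (v : ZMod N × ZMod N × ZMod N × ZMod N) :
    Fin 7 → ZMod N :=
  ![v.1, v.2.1, v.2.2.1, v.2.2.2, a, b, c]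

/-- A quadruple `(x₁,x₂,x₃,z)` is degenerate if it satisfies a nontrivial relation
`ε₁y₁ + ε₂y₂ + ε₃y₃ + ε₄y₄ = 0` with `εⱼ ∈ {-1,0,1}`,
`yⱼ ∈ {x₁,x₂,x₃,z,a,b,c}`, where the relation does not vanish identically as a formal
linear combination and at least one `yⱼ` with `εⱼ ≠ 0` lies in `{x₁,x₂,x₃,z}`. -/
def DegenerateBase {N : ℕ} (a b c : ZMod N) (v : ZMod N × ZMod N × ZMod N × ZMod N) :
    Prop :=
  ∃ (ε : Fin 4 → ℤ) (y : Fin 4 → Fin 7),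
    (∀ j, ε j = -1 ∨ ε j = 0 ∨ ε j = 1) ∧
    (∑ j : Fin 4, (ε j : ZMod N) * val7 a b c v (y j)) = 0 ∧
    (∃ k : Fin 7, (∑ j : Fin 4, if y j = k then ε j else 0) ≠ 0) ∧
    (∃ j : Fin 4, ε j ≠ 0 ∧ (y j : ℕ) < 4)

/-- `m(B)`: the number of non-degenerate quadruples `v` such that every element of `B`
occurs among the nine coordinates of `ψ(v)`. -/
noncomputable def mBase {N : ℕ} (a b c : ZMod N) (B : Finset (ZMod N)) : ℕ :=
  Set.ncard {v : ZMod N × ZMod N × ZMod N × ZMod N |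
    ¬ DegenerateBase a b c v ∧ ∀ x ∈ B, ∃ j : Fin 9, psiBase a b c v j = x}

/-!
Group the nine sums into three blocks, the `i`-th one consisting of `xᵢ + z` and of two translates
of `xᵢ` by constants. Fix the values of the sums in a set `S` of positions meeting `t` blocks. Once
`z` is known, each of these `t` blocks determines its `xᵢ`, which leaves at most `4 - t` free
parameters; and `z` itself is determined as soon as `S` contains a whole block. Without a whole
block `|S| ≤ 2t`, and with one `|S| ≤ 3t`; as `t ≤ 3`, in both cases at most
`max 0 (4 - ⌈|S|/2⌉)` parameters are free. Finally, a set `B` is covered through one of at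
most `9!` injective choices of positions for its elements.
-/

open Finset

/-- The sums `xᵢ + d i k` and `xᵢ + z`, at the positions `(i, some k)` and `(i, none)`
respectively, of a point `v = (x, z)`. The nine coordinates of `psiBase` are the case of three
blocks `i` with two constants `d i k` each. -/
def blockSum {ι κ G : Type*} [Add G] (d : ι → κ → G) (v : (ι → G) × G) (j : ι × Option κ) : G :=
  v.1 j.1 + j.2.elim v.2 (d j.1)

lemma card_le_mul_card_image_fst {ι β : Type*} [DecidableEq ι] [Fintype β] (S : Finset (ι × β)) :
    #S ≤ Fintype.card β * #(S.image Prod.fst) := by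
  classical
  calc #S ≤ #(S.image Prod.fst ×ˢ S.image Prod.snd) := card_le_card subset_product
    _ = #(S.image Prod.snd) * #(S.image Prod.fst) := by rw [card_product, mul_comm]
    _ ≤ Fintype.card β * #(S.image Prod.fst) := Nat.mul_le_mul_right _ (card_le_univ _)

lemma card_le_pred_mul_card_image_fst {ι β : Type*} [DecidableEq ι] [Fintype β]
    {S : Finset (ι × β)} (hS : ∀ i, ∃ o, (i, o) ∉ S) :
    #S ≤ (Fintype.card β - 1) * #(S.image Prod.fst) := by
  classical
  refine card_le_mul_card_image S _ fun i _ => ?_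
  obtain ⟨o, ho⟩ := hS i
  rw [← card_univ, ← card_erase_of_mem (mem_univ o)]
  refine card_le_card_of_injOn Prod.snd ?_ ?_
  · rintro ⟨i', o'⟩ hj
    obtain ⟨hjS, rfl⟩ := mem_filter.1 hj
    exact mem_coe.2 (mem_erase.2 ⟨by rintro rfl; exact ho hjS, mem_univ o'⟩)
  · intro j hj j' hj' h
    exact Prod.ext ((mem_filter.1 hj).2.trans (mem_filter.1 hj').2.symm) h

lemma descFactorial_le_factorial (n k : ℕ) : n.descFactorial k ≤ n.factorial := by
  rcases le_or_gt k n with hk | hk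
  · rw [← Nat.factorial_mul_descFactorial hk]
    exact Nat.le_mul_of_pos_left _ (Nat.factorial_pos _)
  · simp [Nat.descFactorial_of_lt hk]

lemma ncard_subset_range_le {X J α : Type*} [Finite X] [Fintype J] (ψ : X → J → α)
    (B : Finset α) {K : ℕ}
    (hK : ∀ (S : Finset J) (v : X), #S = #B → {w | Set.EqOn (ψ w) (ψ v) S}.ncard ≤ K) :
    {v | (B : Set α) ⊆ Set.range (ψ v)}.ncard ≤ (Fintype.card J).descFactorial #B * K := by
  classical
  let covered (t : B ↪ J) : Set X := {v | ∀ x, ψ v (t x) = x}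
  have covered_le (t : B ↪ J) : (covered t).ncard ≤ K := by
    rcases (covered t).eq_empty_or_nonempty with h | ⟨v, hv⟩
    · simp [h]
    refine (Set.ncard_le_ncard ?_ (Set.toFinite _)).trans (hK (univ.map t) v (by simp))
    intro w hw j hj
    obtain ⟨x, -, rfl⟩ := mem_map.1 hj
    exact (hw x).trans (hv x).symm
  have subset_iUnion : {v | (B : Set α) ⊆ Set.range (ψ v)} ⊆ ⋃ t, covered t := by
    intro v hv
    choose t ht using fun x : B => hv x.2
    have t_injective : Function.Injective t := fun x y hxy =>
      Subtype.ext ((ht x).symm.trans ((congrArg (ψ v) hxy).trans (ht y)))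
    exact Set.mem_iUnion.2 ⟨⟨t, t_injective⟩, ht⟩
  calc {v | (B : Set α) ⊆ Set.range (ψ v)}.ncard
      ≤ (⋃ t, covered t).ncard := Set.ncard_le_ncard subset_iUnion (Set.toFinite _)
    _ ≤ ∑ t, (covered t).ncard := Set.ncard_iUnion_le_of_fintype covered
    _ ≤ ∑ _t : B ↪ J, K := sum_le_sum fun t _ => covered_le t
    _ = (Fintype.card J).descFactorial #B * K := by simp [Fintype.card_embedding_eq]

lemma natCard_coe_compl_arrow {ι G : Type*} [Fintype ι] [DecidableEq ι] (T : Finset ι) :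
    Nat.card (↥Tᶜ → G) = Nat.card G ^ (Fintype.card ι - #T) := by
  rw [Nat.card_fun, Nat.card_eq_finsetCard, card_compl]

section BlockSum

variable {ι κ G : Type*} [Add G] {d : ι → κ → G} {v w : (ι → G) × G}

lemma fst_apply_eq_of_blockSum_eq [IsRightCancelAdd G] {j : ι × Option κ} (hz : v.2 = w.2)
    (h : blockSum d v j = blockSum d w j) : v.1 j.1 = w.1 j.1 := by
  rw [blockSum, blockSum, hz] at h
  exact add_right_cancel h

lemma snd_eq_of_blockSum_eq [IsCancelAdd G] {i : ι} {k : κ}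
    (hsome : blockSum d v (i, some k) = blockSum d w (i, some k))
    (hnone : blockSum d v (i, none) = blockSum d w (i, none)) : v.2 = w.2 := by
  have hx : v.1 i = w.1 i := add_right_cancel hsome
  simp only [blockSum, Option.elim_none, hx] at hnone
  exact add_left_cancel hnone

variable [DecidableEq ι] {S : Finset (ι × Option κ)}

lemma eq_of_eqOn_blockSum [IsRightCancelAdd G]
    (h : Set.EqOn (blockSum d v) (blockSum d w) S) (hz : v.2 = w.2)
    (hx : ∀ i ∉ S.image Prod.fst, v.1 i = w.1 i) : v = w := by
  refine Prod.ext (funext fun i => ?_) hz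
  by_cases hi : i ∈ S.image Prod.fst
  · obtain ⟨j, hj, rfl⟩ := mem_image.1 hi
    exact fst_apply_eq_of_blockSum_eq hz (h hj)
  · exact hx i hi

variable [Fintype ι] [Finite G]

lemma ncard_eqOn_blockSum_le [IsRightCancelAdd G] (d : ι → κ → G) (S : Finset (ι × Option κ))
    (v : (ι → G) × G) :
    {w | Set.EqOn (blockSum d w) (blockSum d v) S}.ncard ≤
      Nat.card G ^ (Fintype.card ι - #(S.image Prod.fst) + 1) := by
  let free (w : (ι → G) × G) : (↥(S.image Prod.fst)ᶜ → G) × G := (fun i => w.1 i, w.2)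
  have free_injOn : Set.InjOn free {w | Set.EqOn (blockSum d w) (blockSum d v) S} := by
    intro w hw w' hw' h
    exact eq_of_eqOn_blockSum (hw.trans hw'.symm) (Prod.ext_iff.1 h).2
      fun i hi => congrFun (Prod.ext_iff.1 h).1 ⟨i, mem_compl.2 hi⟩
  refine (Set.ncard_le_ncard_of_injOn free (fun w _ => Set.mem_univ (free w)) free_injOn).trans ?_
  rw [Set.ncard_univ, Nat.card_prod, natCard_coe_compl_arrow, pow_succ]

lemma ncard_eqOn_blockSum_le_of_mem [IsCancelAdd G] {i : ι} {k : κ}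
    (hsome : (i, some k) ∈ S) (hnone : (i, none) ∈ S) (v : (ι → G) × G) :
    {w | Set.EqOn (blockSum d w) (blockSum d v) S}.ncard ≤
      Nat.card G ^ (Fintype.card ι - #(S.image Prod.fst)) := by
  let free (w : (ι → G) × G) : ↥(S.image Prod.fst)ᶜ → G := fun i => w.1 i
  have free_injOn : Set.InjOn free {w | Set.EqOn (blockSum d w) (blockSum d v) S} := by
    intro w hw w' hw' h
    have heq := hw.trans hw'.symm
    exact eq_of_eqOn_blockSum heq (snd_eq_of_blockSum_eq (heq hsome) (heq hnone))
      fun i hi => congrFun h ⟨i, mem_compl.2 hi⟩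
  refine (Set.ncard_le_ncard_of_injOn free (fun w _ => Set.mem_univ (free w)) free_injOn).trans ?_
  rw [Set.ncard_univ, natCard_coe_compl_arrow]

end BlockSum

lemma ncard_eqOn_blockSum_le_pow_four_sub {G : Type*} [Add G] [IsCancelAdd G] [Finite G]
    (d : Fin 3 → Fin 2 → G) (S : Finset (Fin 3 × Option (Fin 2))) (v : (Fin 3 → G) × G) :
    {w | Set.EqOn (blockSum d w) (blockSum d v) S}.ncard ≤ Nat.card G ^ (4 - (#S + 1) / 2) := by
  have : Nonempty G := ⟨v.2⟩
  have hblocks : #(S.image Prod.fst) ≤ 3 := card_le_univ _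
  by_cases hfull : ∃ i, ∀ o, (i, o) ∈ S
  · obtain ⟨i, hi⟩ := hfull
    have hcard : #S ≤ 3 * #(S.image Prod.fst) := card_le_mul_card_image_fst S
    refine (ncard_eqOn_blockSum_le_of_mem (hi (some 0)) (hi none) v).trans ?_
    exact Nat.pow_le_pow_right Nat.card_pos (by rw [Fintype.card_fin]; omega)
  · push Not at hfull
    have hcard : #S ≤ 2 * #(S.image Prod.fst) := card_le_pred_mul_card_image_fst hfull
    refine (ncard_eqOn_blockSum_le d S v).trans ?_
    exact Nat.pow_le_pow_right Nat.card_pos (by rw [Fintype.card_fin]; omega)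

lemma psiBase_mem_range_blockSum {N : ℕ} (a b c : ZMod N)
    (v : ZMod N × ZMod N × ZMod N × ZMod N) (j : Fin 9) :
    psiBase a b c v j ∈
      Set.range (blockSum ![![a, b], ![a, c], ![b, c]] (![v.1, v.2.1, v.2.2.1], v.2.2.2)) := by
  let position : Fin 9 → Fin 3 × Option (Fin 2) :=
    ![(0, some 0), (0, some 1), (0, none), (1, some 0), (1, none), (1, some 1),
      (2, none), (2, some 0), (2, some 1)]
  exact ⟨position j, by fin_cases j <;> rfl⟩

lemma mBase_le_ncard_subset_range_blockSum {N : ℕ} [NeZero N] (a b c : ZMod N)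
    (B : Finset (ZMod N)) :
    mBase a b c B ≤
      {v | (B : Set (ZMod N)) ⊆
        Set.range (blockSum ![![a, b], ![a, c], ![b, c]] v)}.ncard := by
  refine Set.ncard_le_ncard_of_injOn (fun v => (![v.1, v.2.1, v.2.2.1], v.2.2.2)) ?_ ?_
  · rintro v ⟨-, hv⟩ x hx
    obtain ⟨j, rfl⟩ := hv x hx
    exact psiBase_mem_range_blockSum a b c v j
  · rintro ⟨x₁, x₂, x₃, z⟩ - ⟨y₁, y₂, y₃, z'⟩ - h
    simpa [and_assoc] using h

theorem mBase_bound_general {G : Type*} [Add G] [IsCancelAdd G] [Finite G]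
    (d : Fin 3 → Fin 2 → G) (B : Finset G) :
    {v | (B : Set G) ⊆ Set.range (blockSum d v)}.ncard ≤
      Nat.factorial 9 * Nat.card G ^ (4 - (#B + 1) / 2) :=
  (ncard_subset_range_le (blockSum d) B fun S v hS =>
    hS ▸ ncard_eqOn_blockSum_le_pow_four_sub d S v).trans
      (Nat.mul_le_mul_right _ (descFactorial_le_factorial 9 #B))

theorem mBase_bound :
    ∃ C : ℝ, 0 < C ∧ ∀ᶠ N : ℕ in atTop,
      ∀ a b c : ZMod N, a ≠ b → a ≠ c → b ≠ c →
        ∀ B : Finset (ZMod N), B.Nonempty → B.card ≤ 9 →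
          (B.card ≤ 8 →
            (mBase a b c B : ℝ) ≤ C * (N : ℝ) ^ (4 - (B.card + 1) / 2 : ℕ)) ∧
          (B.card = 9 → (mBase a b c B : ℝ) ≤ C) := by
  refine ⟨Nat.factorial 9, mod_cast Nat.factorial_pos 9, ?_⟩
  filter_upwards [eventually_ne_atTop 0] with N hN a b c _ _ _ B _ _
  have : NeZero N := ⟨hN⟩
  have hle : mBase a b c B ≤ Nat.factorial 9 * N ^ (4 - (B.card + 1) / 2) := by
    simpa only [Nat.card_zmod] using
      (mBase_le_ncard_subset_range_blockSum a b c B).trans (mBase_bound_general _ B)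
  have hle_real : (mBase a b c B : ℝ) ≤ Nat.factorial 9 * (N : ℝ) ^ (4 - (B.card + 1) / 2) :=
    mod_cast hle
  -- For `B.card = 9` the truncated exponent `4 - 5` is `0`.
  exact ⟨fun _ => hle_real, fun h9 => by simpa [h9] using hle_real⟩
end

section
/- Let (ψ^i)_{i ≥ 0} be any admissible family of maps over ZMod N. Then for every i ≥ 0 and every coordinate index j ∈ {1, …, 2d_i + 1} there exist input positions s_j ∈ {a, b, c, v₁, …, v_{d_i}} and y_j ∈ {v₁, …, v_{d_i}} with s_j ≠ y_j such that for all inputs the j-th coordinate of ψ^i(a,b,c,v) equals the sum of the values at positions s_j and y_j; moreover the unordered pairs {s_j, y_j} of input positions are pairwise distinct as j ranges over 1, …, 2d_i + 1. -/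
/-- `dd i = (3^(i+1) - 1)/2`, the number of free parameters of `Λ^i`. -/
def dd : ℕ → ℕ
  | 0 => 1
  | (i + 1) => 3 * dd i + 1

theorem dd_succ (i : ℕ) : dd (i + 1) = 3 * dd i + 1 := rfl

/-- Assemble `(a, b, c)` and a `dd i`-tuple `v` into a single input tuple of `ψ^i`;
positions `0, 1, 2` carry `a, b, c` and position `3 + k` carries `v k`. -/
def abcv {N : ℕ} (i : ℕ) (a b c : ZMod N) (v : Fin (dd i) → ZMod N) :
    Fin (3 + dd i) → ZMod N :=
  fun j =>
    if h0 : (j : ℕ) = 0 then a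
    else if h1 : (j : ℕ) = 1 then b
    else if h2 : (j : ℕ) = 2 then c
    else v ⟨(j : ℕ) - 3, by have := j.isLt; omega⟩

/-- Concatenation `v₁ ⊕ v₂ ⊕ v₃ ⊕ z` of three `dd i`-tuples and one extra entry,
giving a `dd (i+1)`-tuple. -/
def vcat {N : ℕ} (i : ℕ) (v₁ v₂ v₃ : Fin (dd i) → ZMod N) (z : ZMod N) :
    Fin (dd (i + 1)) → ZMod N :=
  fun j =>
    if h1 : (j : ℕ) < dd i then v₁ ⟨(j : ℕ), h1⟩
    else if h2 : (j : ℕ) < 2 * dd i then v₂ ⟨(j : ℕ) - dd i, by omega⟩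
    else if h3 : (j : ℕ) < 3 * dd i then v₃ ⟨(j : ℕ) - 2 * dd i, by omega⟩
    else z

/-- Concatenation `u₁ ⊕ u₂ ⊕ u₃` of three output tuples of `ψ^i`, giving an output
tuple of `ψ^{i+1}`. -/
def ocat {N : ℕ} (i : ℕ) (u₁ u₂ u₃ : Fin (2 * dd i + 1) → ZMod N) :
    Fin (2 * dd (i + 1) + 1) → ZMod N :=
  fun j =>
    if h1 : (j : ℕ) < 2 * dd i + 1 then u₁ ⟨(j : ℕ), h1⟩
    else if h2 : (j : ℕ) < 2 * (2 * dd i + 1) then u₂ ⟨(j : ℕ) - (2 * dd i + 1), by omega⟩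
    else u₃ ⟨(j : ℕ) - 2 * (2 * dd i + 1), by
      have := j.isLt; have hd := dd_succ i; omega⟩

/-- A family `(ψ^i)` is admissible if `ψ⁰(a,b,c,x) = (x+a, x+b, x+c)` and
`ψ^{i+1}(a,b,c, v₁⊕v₂⊕v₃⊕z) = ψ^i(a,b,z,v₁) ⊕ ψ^i(a,z,c,v₂) ⊕ ψ^i(z,b,c,v₃)`. -/
def Admissible (N : ℕ)
    (ψ : ∀ i, (Fin (3 + dd i) → ZMod N) → (Fin (2 * dd i + 1) → ZMod N)) : Prop :=
  (∀ (w : Fin (3 + dd 0) → ZMod N) (j : Fin (2 * dd 0 + 1)),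
      ψ 0 w j = w ⟨3, by have h : dd 0 = 1 := rfl; omega⟩ +
        w ⟨(j : ℕ), by have := j.isLt; have h : dd 0 = 1 := rfl; omega⟩) ∧
  (∀ (i : ℕ) (a b c z : ZMod N) (v₁ v₂ v₃ : Fin (dd i) → ZMod N),
      ψ (i + 1) (abcv (i + 1) a b c (vcat i v₁ v₂ v₃ z)) =
        ocat i (ψ i (abcv i a b z v₁)) (ψ i (abcv i a z c v₂)) (ψ i (abcv i z b c v₃)))

/-!
The coordinates of `ψ^{i+1}` fall into three blocks, each a copy of `ψ^i` read along an injection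
of input positions: in block `t` the position `2 - t` among `a, b, c` is redirected to `z`, and the
`v` positions go to the `t`-th tuple. By induction every coordinate is a sum over a pair containing
a `v` position. Distinct blocks share only `a, b, c, z`, so the `v` position that a pair inherits
from its block identifies the block, and injectivity inside a block then identifies the coordinate.
-/

open Function

theorem injective_image_of_blocks {τ ι κ κ' : Type*} [DecidableEq κ'] {E : τ → κ → κ'}
    {S : ι → Finset κ} (hE : ∀ t, Injective (E t)) (hS : Injective S)
    (hsep : ∀ j, ∃ x ∈ S j, ∀ t t' x', E t x = E t' x' → t = t') :
    Injective fun p : τ × ι => (S p.2).image (E p.1) := by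
  rintro ⟨t, j⟩ ⟨t', j'⟩ (h : (S j).image (E t) = (S j').image (E t'))
  obtain ⟨x, hx, hx_sep⟩ := hsep j
  obtain ⟨x', -, hx'⟩ := Finset.mem_image.mp (h ▸ Finset.mem_image_of_mem (E t) hx)
  obtain rfl : t = t' := hx_sep t t' x' hx'.symm
  rw [hS (Finset.image_injective (hE t) h)]

/-- The position in the input of `ψ^{i+1}` that feeds position `x` of the `t`-th copy of `ψ^i`.
The copies read `(a, b, z)`, `(a, z, c)` and `(z, b, c)` for `t = 0, 1, 2`, so `z`, which sits at
position `3 + 3 * dd i`, replaces position `2 - t`. -/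
def blockPos (i : ℕ) (t : Fin 3) (x : Fin (3 + dd i)) : Fin (3 + dd (i + 1)) :=
  ⟨if (x : ℕ) < 3 then if (x : ℕ) + t = 2 then 3 + 3 * dd i else x else x + t * dd i, by
    have := dd_succ i
    fin_cases t <;> grind⟩

theorem blockPos_injective (i : ℕ) (t : Fin 3) : Injective (blockPos i t) := by
  intro x x' h
  simp only [blockPos, Fin.ext_iff] at h ⊢
  fin_cases t <;> grind

theorem three_le_blockPos {i : ℕ} (t : Fin 3) {x : Fin (3 + dd i)} (hx : 3 ≤ (x : ℕ)) :
    3 ≤ (blockPos i t x : ℕ) := by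
  simp only [blockPos, hx.not_gt, if_false]
  omega

theorem block_eq_of_blockPos_eq {i : ℕ} {t t' : Fin 3} {x x' : Fin (3 + dd i)}
    (hx : 3 ≤ (x : ℕ)) (h : blockPos i t x = blockPos i t' x') : t = t' := by
  simp only [blockPos, Fin.ext_iff] at h
  fin_cases t <;> fin_cases t' <;> grind

/-- The `r`-th coordinate of the `t`-th block of `ψ^{i+1}`, as a coordinate of `ψ^{i+1}`. -/
def outputEquiv (i : ℕ) : Fin 3 × Fin (2 * dd i + 1) ≃ Fin (2 * dd (i + 1) + 1) :=
  finProdFinEquiv.trans (finCongr (by rw [dd_succ]; ring))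

theorem val_outputEquiv (i : ℕ) (t : Fin 3) (r : Fin (2 * dd i + 1)) :
    (outputEquiv i (t, r) : ℕ) = r + (2 * dd i + 1) * t := rfl

section Concatenation

variable {N : ℕ} (i : ℕ)

theorem ocat_outputEquiv (u₁ u₂ u₃ : Fin (2 * dd i + 1) → ZMod N) (t : Fin 3)
    (r : Fin (2 * dd i + 1)) :
    ocat i u₁ u₂ u₃ (outputEquiv i (t, r)) = ![u₁, u₂, u₃] t r := by
  fin_cases t <;> simp only [ocat, val_outputEquiv, Fin.reduceFinMk, Fin.zero_eta, Fin.mk_one,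
    Fin.val_zero, Fin.val_one, Fin.val_two, Matrix.cons_val] <;> grind

theorem abcv_vcat_comp_blockPos (a b c z : ZMod N) (v₁ v₂ v₃ : Fin (dd i) → ZMod N)
    (t : Fin 3) :
    abcv (i + 1) a b c (vcat i v₁ v₂ v₃ z) ∘ blockPos i t =
      ![abcv i a b z v₁, abcv i a z c v₂, abcv i z b c v₃] t := by
  funext x
  fin_cases t <;> simp only [comp_apply, abcv, vcat, blockPos, Fin.reduceFinMk, Fin.zero_eta,
    Fin.mk_one, Fin.val_zero, Fin.val_one, Fin.val_two, Matrix.cons_val] <;> grind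

theorem exists_abcv_vcat_eq (w : Fin (3 + dd (i + 1)) → ZMod N) :
    ∃ (a b c z : ZMod N) (v₁ v₂ v₃ : Fin (dd i) → ZMod N),
      abcv (i + 1) a b c (vcat i v₁ v₂ v₃ z) = w := by
  have hd := dd_succ i
  refine ⟨w ⟨0, by omega⟩, w ⟨1, by omega⟩, w ⟨2, by omega⟩, w ⟨3 + 3 * dd i, by omega⟩,
    fun k => w ⟨3 + k, by omega⟩, fun k => w ⟨3 + dd i + k, by omega⟩,
    fun k => w ⟨3 + 2 * dd i + k, by omega⟩, ?_⟩
  funext x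
  simp only [abcv, vcat]
  split_ifs <;> congr 1 <;> ext <;> grind

end Concatenation

/-- The position `y_j ∈ {v₁, …, v_{d_i}}` in the sum computed by the `j`-th coordinate of `ψ^i`. -/
def freeSummand : ∀ i, Fin (2 * dd i + 1) → Fin (3 + dd i)
  | 0, _ => ⟨3, by decide⟩
  | i + 1, j =>
    let p := (outputEquiv i).symm j
    blockPos i p.1 (freeSummand i p.2)

/-- The position `s_j` added to `y_j = freeSummand i j` in the `j`-th coordinate of `ψ^i`. -/
def otherSummand : ∀ i, Fin (2 * dd i + 1) → Fin (3 + dd i)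
  | 0, j => j.castLE (by decide)
  | i + 1, j =>
    let p := (outputEquiv i).symm j
    blockPos i p.1 (otherSummand i p.2)

theorem three_le_freeSummand (i : ℕ) (j : Fin (2 * dd i + 1)) : 3 ≤ (freeSummand i j : ℕ) := by
  induction i with
  | zero => exact le_rfl
  | succ i ih => exact three_le_blockPos _ (ih _)

theorem otherSummand_ne_freeSummand (i : ℕ) (j : Fin (2 * dd i + 1)) :
    otherSummand i j ≠ freeSummand i j := by
  induction i with
  | zero => exact Fin.ne_of_lt j.isLt
  | succ i ih => exact (blockPos_injective i _).ne (ih _)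

/-- The unordered pair `{s_j, y_j}` of input positions summed by the `j`-th coordinate of `ψ^i`. -/
def summandPair (i : ℕ) (j : Fin (2 * dd i + 1)) : Finset (Fin (3 + dd i)) :=
  {otherSummand i j, freeSummand i j}

theorem summandPair_succ (i : ℕ) :
    summandPair (i + 1) =
      (fun p => (summandPair i p.2).image (blockPos i p.1)) ∘ (outputEquiv i).symm := by
  funext j
  simp only [summandPair, comp_apply, Finset.image_insert, Finset.image_singleton, otherSummand,
    freeSummand]

theorem summandPair_injective (i : ℕ) : Injective (summandPair i) := by
  induction i with
  | zero => decide
  | succ i ih =>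
    rw [summandPair_succ]
    refine (injective_image_of_blocks (blockPos_injective i) ih fun j => ?_).comp
      (outputEquiv i).symm.injective
    exact ⟨freeSummand i j, by simp [summandPair],
      fun _ _ _ => block_eq_of_blockPos_eq (three_le_freeSummand i j)⟩

namespace Admissible

variable {N : ℕ} {ψ : ∀ i, (Fin (3 + dd i) → ZMod N) → (Fin (2 * dd i + 1) → ZMod N)}

theorem apply_succ (hψ : Admissible N ψ) (i : ℕ) (w : Fin (3 + dd (i + 1)) → ZMod N) (t : Fin 3)
    (r : Fin (2 * dd i + 1)) :
    ψ (i + 1) w (outputEquiv i (t, r)) = ψ i (w ∘ blockPos i t) r := by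
  obtain ⟨a, b, c, z, v₁, v₂, v₃, rfl⟩ := exists_abcv_vcat_eq i w
  rw [hψ.2, ocat_outputEquiv, abcv_vcat_comp_blockPos]
  fin_cases t <;> rfl

theorem apply_eq_add (hψ : Admissible N ψ) (i : ℕ) (w : Fin (3 + dd i) → ZMod N)
    (j : Fin (2 * dd i + 1)) :
    ψ i w j = w (otherSummand i j) + w (freeSummand i j) := by
  induction i with
  | zero => exact (hψ.1 w j).trans (add_comm _ _)
  | succ i ih =>
    obtain ⟨⟨t, r⟩, rfl⟩ := (outputEquiv i).surjective j
    simp only [hψ.apply_succ, ih, comp_apply, otherSummand, freeSummand, Equiv.symm_apply_apply]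

end Admissible

theorem admissible_coords_are_sums_of_pairs (N : ℕ)
    (ψ : ∀ i, (Fin (3 + dd i) → ZMod N) → (Fin (2 * dd i + 1) → ZMod N))
    (hψ : Admissible N ψ) (i : ℕ) :
    ∃ s y : Fin (2 * dd i + 1) → Fin (3 + dd i),
      (∀ j, 3 ≤ (y j : ℕ)) ∧
      (∀ j, s j ≠ y j) ∧
      (∀ (w : Fin (3 + dd i) → ZMod N) (j), ψ i w j = w (s j) + w (y j)) ∧
      Function.Injective (fun j => ({s j, y j} : Finset (Fin (3 + dd i)))) := by
  exact ⟨otherSummand i, freeSummand i, three_le_freeSummand i, otherSummand_ne_freeSummand i,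
    hψ.apply_eq_add i, summandPair_injective i⟩
end

section
/- Let (ψ^i)_{i ≥ 0} be any admissible family of maps over ZMod N. Then for every i ≥ 0 and all fixed a, b ∈ ZMod N, the map (ZMod N)^{d_i} × ZMod N → (ZMod N)^{2d_i+1} given by (v, z) ↦ ψ^i(a, b, z, v) is injective. -/
/-!
The blocks of `ψ^{i+1}(a,b,c, v₁⊕v₂⊕v₃⊕z)` are decoded from left to right, each by the induction
hypothesis with its first two arguments already known: `ψ^i(a,b,z,v₁)` yields `v₁` and `z`, then
`ψ^i(a,z,c,v₂)` yields `v₂` and `c`, and finally `ψ^i(z,b,c,v₃)` yields `v₃`.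
-/

theorem ocat_apply_left {N : ℕ} (i : ℕ) (u₁ u₂ u₃ : Fin (2 * dd i + 1) → ZMod N)
    (j : Fin (2 * dd i + 1)) :
    ocat i u₁ u₂ u₃ ⟨j, by have := dd_succ i; omega⟩ = u₁ j :=
  dif_pos j.isLt

theorem ocat_apply_middle {N : ℕ} (i : ℕ) (u₁ u₂ u₃ : Fin (2 * dd i + 1) → ZMod N)
    (j : Fin (2 * dd i + 1)) :
    ocat i u₁ u₂ u₃ ⟨2 * dd i + 1 + j, by have := dd_succ i; omega⟩ = u₂ j := by
  have h_lt : 2 * dd i + 1 + (j : ℕ) < 2 * (2 * dd i + 1) := by omega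
  simp only [ocat, (Nat.le_add_right _ _).not_gt, h_lt, dite_true, dite_false,
    Nat.add_sub_cancel_left]

theorem ocat_apply_right {N : ℕ} (i : ℕ) (u₁ u₂ u₃ : Fin (2 * dd i + 1) → ZMod N)
    (j : Fin (2 * dd i + 1)) :
    ocat i u₁ u₂ u₃ ⟨2 * (2 * dd i + 1) + j, by have := dd_succ i; omega⟩ = u₃ j := by
  have h_ge : ¬ 2 * (2 * dd i + 1) + (j : ℕ) < 2 * dd i + 1 := by omega
  simp only [ocat, h_ge, (Nat.le_add_right _ _).not_gt, dite_false, Nat.add_sub_cancel_left]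

theorem ocat_injective {N : ℕ} (i : ℕ) (u₁ u₂ u₃ w₁ w₂ w₃ : Fin (2 * dd i + 1) → ZMod N)
    (h : ocat i u₁ u₂ u₃ = ocat i w₁ w₂ w₃) : u₁ = w₁ ∧ u₂ = w₂ ∧ u₃ = w₃ := by
  refine ⟨funext fun j => ?_, funext fun j => ?_, funext fun j => ?_⟩
  · simpa only [ocat_apply_left] using congrFun h ⟨j, by have := dd_succ i; omega⟩
  · simpa only [ocat_apply_middle] using
      congrFun h ⟨2 * dd i + 1 + j, by have := dd_succ i; omega⟩
  · simpa only [ocat_apply_right] using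
      congrFun h ⟨2 * (2 * dd i + 1) + j, by have := dd_succ i; omega⟩

theorem vcat_surjective {N : ℕ} (i : ℕ) (v : Fin (dd (i + 1)) → ZMod N) :
    ∃ v₁ v₂ v₃ z, vcat i v₁ v₂ v₃ z = v := by
  have hd := dd_succ i
  refine ⟨fun j => v ⟨j, by omega⟩, fun j => v ⟨dd i + j, by omega⟩,
    fun j => v ⟨2 * dd i + j, by omega⟩, v ⟨3 * dd i, by omega⟩, funext fun j => ?_⟩
  unfold vcat
  split_ifs <;> exact congrArg v (Fin.ext (by dsimp only <;> omega))

theorem Admissible.injective_zero {N : ℕ}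
    {ψ : ∀ i, (Fin (3 + dd i) → ZMod N) → (Fin (2 * dd i + 1) → ZMod N)}
    (hψ : Admissible N ψ) (a b : ZMod N) :
    Function.Injective
      (fun vz : (Fin (dd 0) → ZMod N) × ZMod N => ψ 0 (abcv 0 a b vz.2 vz.1)) := by
  rintro ⟨v, c⟩ ⟨w, c'⟩ h
  have apply_zero (c : ZMod N) (v : Fin (dd 0) → ZMod N) :
      ψ 0 (abcv 0 a b c v) ⟨0, by decide⟩ = v ⟨0, by decide⟩ + a := hψ.1 _ _
  have apply_two (c : ZMod N) (v : Fin (dd 0) → ZMod N) :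
      ψ 0 (abcv 0 a b c v) ⟨2, by decide⟩ = v ⟨0, by decide⟩ + c := hψ.1 _ _
  have hx : v ⟨0, by decide⟩ = w ⟨0, by decide⟩ :=
    add_right_cancel (by simpa only [apply_zero] using congrFun h ⟨0, by decide⟩)
  have hvw : v = w := by
    have : Subsingleton (Fin (dd 0)) := inferInstanceAs (Subsingleton (Fin 1))
    exact funext fun j => Subsingleton.elim ⟨0, by decide⟩ j ▸ hx
  subst hvw
  have hc : c = c' :=
    add_left_cancel (by simpa only [apply_two] using congrFun h ⟨2, by decide⟩)
  rw [hc]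

theorem admissible_injective_in_v_z_general {α : Type*} {V W : ℕ → Type*}
    {ψ : ∀ i, α → α → α → V i → W i}
    {inCat : ∀ i, V i → V i → V i → α → V (i + 1)}
    {outCat : ∀ i, W i → W i → W i → W (i + 1)}
    (inCat_surjective : ∀ i v, ∃ v₁ v₂ v₃ z, inCat i v₁ v₂ v₃ z = v)
    (outCat_injective : ∀ i u₁ u₂ u₃ w₁ w₂ w₃,
      outCat i u₁ u₂ u₃ = outCat i w₁ w₂ w₃ → u₁ = w₁ ∧ u₂ = w₂ ∧ u₃ = w₃)
    (injective_zero : ∀ a b, Function.Injective fun vz : V 0 × α => ψ 0 a b vz.2 vz.1)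
    (map_inCat : ∀ i a b c z v₁ v₂ v₃, ψ (i + 1) a b c (inCat i v₁ v₂ v₃ z) =
      outCat i (ψ i a b z v₁) (ψ i a z c v₂) (ψ i z b c v₃))
    (i : ℕ) (a b : α) :
    Function.Injective fun vz : V i × α => ψ i a b vz.2 vz.1 := by
  induction i generalizing a b with
  | zero => exact injective_zero a b
  | succ i ih =>
    rintro ⟨v, c⟩ ⟨w, c'⟩ h
    obtain ⟨v₁, v₂, v₃, z, rfl⟩ := inCat_surjective i v
    obtain ⟨w₁, w₂, w₃, y, rfl⟩ := inCat_surjective i w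
    simp only [map_inCat] at h
    obtain ⟨h₁, h₂, h₃⟩ := outCat_injective _ _ _ _ _ _ _ h
    obtain ⟨rfl, rfl⟩ : v₁ = w₁ ∧ z = y := Prod.mk.inj (@ih a b (v₁, z) (w₁, y) h₁)
    obtain ⟨rfl, rfl⟩ : v₂ = w₂ ∧ c = c' := Prod.mk.inj (@ih a z (v₂, c) (w₂, c') h₂)
    obtain ⟨rfl, -⟩ : v₃ = w₃ ∧ c = c := Prod.mk.inj (@ih z b (v₃, c) (w₃, c) h₃)
    rfl

theorem admissible_injective_in_v_z (N : ℕ)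
    (ψ : ∀ i, (Fin (3 + dd i) → ZMod N) → (Fin (2 * dd i + 1) → ZMod N))
    (hψ : Admissible N ψ) (i : ℕ) (a b : ZMod N) :
    Function.Injective
      (fun vz : (Fin (dd i) → ZMod N) × ZMod N =>
        ψ i (abcv i a b vz.2 vz.1)) :=
  admissible_injective_in_v_z_general (ψ := fun i a b c v => ψ i (abcv i a b c v))
    vcat_surjective ocat_injective hψ.injective_zero hψ.2 i a b
end
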